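/- arXiv:2601.15258 — 6 statements merged into one kernel-verified Lean document; each statement's English description precedes it below -/
import Mathlib

section
/- In the max-variant with k = 2 facilities, there exists a strategyproof two-phase mechanism whose approximation ratio is at most 9/2; that is, on every instance its output has social cost at most 9/2 times the minimum social cost over all feasible solutions. -/
open Finset

noncomputable section

/-- A distributed facility location setting for `k` facilities and `m` groups:
`n ≥ 2` agents on the real line, partitioned into `m ≥ k` disjoint nonempty groups. -/
structure FLSetting (k m : ℕ) where
  n : ℕ
  hn : 2 ≤ n
  hmk : k ≤ m
  grp : Fin n → Fin m
  surj : Function.Surjective grp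

/-- A two-phase mechanism for `k` facilities: for each number `m` of groups, a
representative function on finite multisets of reals, and a selection function
producing the `k` facility locations from the multiset of representatives. -/
structure TwoPhase (k : ℕ) where
  rep : ℕ → Multiset ℝ → ℝ
  sel : ℕ → Multiset ℝ → Fin k → ℝ

/-- Validity of a two-phase mechanism: the representative of a nonempty multiset
is one of its elements, and the selected facility locations form a sub-multiset
of the representatives. -/
def TwoPhase.Valid {k : ℕ} (M : TwoPhase k) : Prop :=
  (∀ (m : ℕ) (S : Multiset ℝ), S ≠ 0 → M.rep m S ∈ S) ∧
  (∀ (m : ℕ) (R : Multiset ℝ), Multiset.card R = m → k ≤ m →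
    (↑(List.ofFn (M.sel m R)) : Multiset ℝ) ≤ R)

/-- The multiset of (reported) positions of the agents in group `j`. -/
def groupMS {k m : ℕ} (S : FLSetting k m) (x : Fin S.n → ℝ) (j : Fin m) : Multiset ℝ :=
  (Finset.univ.filter (fun i => S.grp i = j)).val.map x

/-- The number of agents in group `j`. -/
def groupSize {k m : ℕ} (S : FLSetting k m) (j : Fin m) : ℕ :=
  (Finset.univ.filter (fun i => S.grp i = j)).card

/-- The multiset of the `m` group representatives. -/
def repsMS {k m : ℕ} (M : TwoPhase k) (S : FLSetting k m) (x : Fin S.n → ℝ) : Multiset ℝ :=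
  (Finset.univ.val.map fun j : Fin m => M.rep m (groupMS S x j))

/-- The facility locations output by mechanism `M` on reported positions `x`. -/
def outcome {k m : ℕ} (M : TwoPhase k) (S : FLSetting k m) (x : Fin S.n → ℝ) : Fin k → ℝ :=
  M.sel m (repsMS M S x)

/-- Sum-variant individual cost: total distance to all facilities. -/
def sumCost (k : ℕ) (xi : ℝ) (y : Fin k → ℝ) : ℝ := ∑ ℓ, |xi - y ℓ|

/-- Max-variant individual cost: distance to the farthest facility. -/
def maxCost (k : ℕ) (xi : ℝ) (y : Fin k → ℝ) : ℝ := ⨆ ℓ, |xi - y ℓ|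

/-- Social cost: average over groups of the average individual cost within the group. -/
def SC {k m : ℕ} (cost : ℝ → (Fin k → ℝ) → ℝ) (S : FLSetting k m) (x : Fin S.n → ℝ)
    (y : Fin k → ℝ) : ℝ :=
  (1 / (m : ℝ)) * ∑ j : Fin m,
    (1 / (groupSize S j : ℝ)) *
      ∑ i ∈ Finset.univ.filter (fun i => S.grp i = j), cost (x i) y

/-- A feasible solution opens the `k` facilities at the positions of `k` distinct agents. -/
def Feasible {k m : ℕ} (S : FLSetting k m) (x : Fin S.n → ℝ) (y : Fin k → ℝ) : Prop :=
  ∃ f : Fin k → Fin S.n, Function.Injective f ∧ ∀ ℓ, y ℓ = x (f ℓ)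

/-- Strategyproofness with respect to an individual cost function. -/
def Strategyproof {k : ℕ} (cost : ℝ → (Fin k → ℝ) → ℝ) (M : TwoPhase k) : Prop :=
  ∀ (m : ℕ) (S : FLSetting k m) (x : Fin S.n → ℝ) (i : Fin S.n) (x' : ℝ),
    cost (x i) (outcome M S x) ≤ cost (x i) (outcome M S (Function.update x i x'))

/-- Strategyproofness restricted to instances with exactly `m` groups. -/
def StrategyproofOn {k : ℕ} (cost : ℝ → (Fin k → ℝ) → ℝ) (M : TwoPhase k) (m : ℕ) : Prop :=
  ∀ (S : FLSetting k m) (x : Fin S.n → ℝ) (i : Fin S.n) (x' : ℝ),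
    cost (x i) (outcome M S x) ≤ cost (x i) (outcome M S (Function.update x i x'))

/-- The `t`-th leftmost element of a multiset of reals (1-indexed). -/
def kthLeftmost (S : Multiset ℝ) (t : ℕ) : ℝ := (S.sort (· ≤ ·)).getD (t - 1) 0

/-- The mechanism `M_m(θ, ℓ, r)` for two facilities: each group's representative is the
position of its `⌈θ·n_g⌉`-th leftmost agent, and the facilities are opened at the
`⌈ℓm⌉`-th and `⌈rm⌉`-th leftmost representative locations. -/
def Mmech (θ l r : ℝ) : TwoPhase 2 where
  rep := fun _ S => kthLeftmost S ⌈θ * (Multiset.card S : ℝ)⌉₊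
  sel := fun m R => ![kthLeftmost R ⌈l * (m : ℝ)⌉₊, kthLeftmost R ⌈r * (m : ℝ)⌉₊]


/-!
Strategyproofness. If one agent at `p` misreports, every entry of the true profile lies between `p`
and the corresponding entry of the reported profile. Order statistics preserve this relation, so
it passes through both phases of a mechanism that selects by rank: each facility opened for the true
profile lies between `p` and its counterpart for the reported one.

Approximation ratio. The farther of two facilities `a ≤ b` is at distance
`|t - (a + b) / 2| + (b - a) / 2` from `t`. Let `a` and `b` be the two middle representatives, with
`λ = ⌊m / 2⌋ / m` of the groups represented up to `a`, and let every representative be the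
`1 - λ` quantile of its group. Then agents of total weight at least
`λ (1 - λ) ≥ 2 / 9 = α` lie weakly to the left of `a`, and as many weakly to the right of `b`. Let
`D` be the weighted mean distance to the midpoint `c` of a competing pair, a lower bound for the
social cost of that pair, and let `c ≤ (a + b) / 2` by symmetry. Comparing distances to `c` and to
`(a + b) / 2`, where the agents beyond `b` gain, bounds the social cost of `(a, b)` by
`D + (1 - 2 α) ((a + b) / 2 - c) + (b - a) / 2 = D + (1 - 2 α) (b - c) + α (b - a)`.
The agents outside `(a, b)` alone give `α (b - c) ≤ D` and `α (b - a) ≤ D`, so `α` times the bound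
is at most `α D + (1 - 2 α) D + α D = D`.
-/

theorem multiset_countP_mono_left {ι : Type*} {T : Multiset ι} {p q : ι → Prop}
    [DecidablePred p] [DecidablePred q] (h : ∀ i ∈ T, p i → q i) : T.countP p ≤ T.countP q := by
  simp only [Multiset.countP_eq_card_filter]
  exact Multiset.card_le_card <| Multiset.le_filter.2
    ⟨Multiset.filter_le _ _, fun i hi => (Multiset.mem_filter.1 hi).elim (h i)⟩

section OrderStatistics

variable {S : Multiset ℝ} {s t : ℕ}

theorem kthLeftmost_eq_getElem (ht : t ∈ Set.Icc 1 S.card) :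
    kthLeftmost S t = (S.sort (· ≤ ·))[t - 1]'(by
      rw [Multiset.length_sort]; exact Nat.sub_one_lt_of_le ht.1 ht.2) :=
  List.getD_eq_getElem _ _ _

theorem kthLeftmost_mem (ht : t ∈ Set.Icc 1 S.card) : kthLeftmost S t ∈ S := by
  rw [kthLeftmost_eq_getElem ht, ← Multiset.mem_sort (· ≤ ·)]
  exact List.getElem_mem _

theorem kthLeftmost_mono (hs : s ∈ Set.Icc 1 S.card) (ht : t ∈ Set.Icc 1 S.card) (hst : s ≤ t) :
    kthLeftmost S s ≤ kthLeftmost S t := by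
  rw [kthLeftmost_eq_getElem hs, kthLeftmost_eq_getElem ht]
  exact (S.pairwise_sort (· ≤ ·)).sortedLE.getElem_le_getElem_of_le (Nat.sub_le_sub_right hst 1)

theorem ofFn_kthLeftmost_le {k : ℕ} {σ : Fin k → ℕ} (hσ : StrictMono σ)
    (hσS : ∀ ℓ, σ ℓ ∈ Set.Icc 1 S.card) :
    (List.ofFn (fun ℓ => kthLeftmost S (σ ℓ)) : Multiset ℝ) ≤ S := by
  have hlt : ∀ ℓ, σ ℓ - 1 < (S.sort (· ≤ ·)).length := fun ℓ => by
    rw [Multiset.length_sort]; exact Nat.sub_one_lt_of_le (hσS ℓ).1 (hσS ℓ).2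
  have hpair : (List.ofFn fun ℓ => (⟨σ ℓ - 1, hlt ℓ⟩ : Fin _)).Pairwise (· < ·) :=
    List.pairwise_ofFn.2 fun ℓ ℓ' h => Nat.sub_lt_sub_right (hσS ℓ).1 (hσ h)
  have hsub := List.map_getElem_sublist hpair
  rw [List.map_ofFn] at hsub
  rw [funext fun ℓ => kthLeftmost_eq_getElem (hσS ℓ)]
  exact (Multiset.coe_le.2 hsub.subperm).trans_eq (S.sort_eq _)

theorem le_countP_le_kthLeftmost (ht : t ∈ Set.Icc 1 S.card) :
    t ≤ S.countP (· ≤ kthLeftmost S t) := by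
  have hlen : (S.sort (· ≤ ·)).length = S.card := S.length_sort _
  have htake : ∀ a ∈ (S.sort (· ≤ ·)).take t, a ≤ kthLeftmost S t := by
    intro a ha
    obtain ⟨i, hi, rfl⟩ := List.mem_take_iff_getElem.1 ha
    rw [kthLeftmost_eq_getElem ht]
    exact (S.pairwise_sort (· ≤ ·)).sortedLE.getElem_le_getElem_of_le (by omega)
  calc t = ((S.sort (· ≤ ·)).take t).length := by
        rw [List.length_take, hlen, min_eq_left ht.2]
    _ = ((S.sort (· ≤ ·)).take t).countP (· ≤ kthLeftmost S t) :=
        (List.countP_eq_length.2 fun a ha => decide_eq_true (htake a ha)).symm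
    _ ≤ (S.sort (· ≤ ·)).countP (· ≤ kthLeftmost S t) := (List.take_sublist _ _).countP_le
    _ = S.countP (· ≤ kthLeftmost S t) := by rw [← Multiset.coe_countP, S.sort_eq]

theorem card_lt_countP_kthLeftmost_le_add (ht : t ∈ Set.Icc 1 S.card) :
    S.card < S.countP (kthLeftmost S t ≤ ·) + t := by
  have hlen : (S.sort (· ≤ ·)).length = S.card := S.length_sort _
  have hdrop : ∀ a ∈ (S.sort (· ≤ ·)).drop (t - 1), kthLeftmost S t ≤ a := by
    intro a ha
    obtain ⟨i, hi, rfl⟩ := List.mem_drop_iff_getElem.1 ha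
    rw [kthLeftmost_eq_getElem ht]
    exact (S.pairwise_sort (· ≤ ·)).sortedLE.getElem_le_getElem_of_le (Nat.le_add_right _ _)
  have hcount : S.card - (t - 1) ≤ S.countP (kthLeftmost S t ≤ ·) :=
    calc S.card - (t - 1) = ((S.sort (· ≤ ·)).drop (t - 1)).length := by
          rw [List.length_drop, hlen]
      _ = ((S.sort (· ≤ ·)).drop (t - 1)).countP (kthLeftmost S t ≤ ·) :=
          (List.countP_eq_length.2 fun a ha => decide_eq_true (hdrop a ha)).symm
      _ ≤ (S.sort (· ≤ ·)).countP (kthLeftmost S t ≤ ·) := (List.drop_sublist _ _).countP_le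
      _ = S.countP (kthLeftmost S t ≤ ·) := by rw [← Multiset.coe_countP, S.sort_eq]
  have ht1 := ht.1
  omega

theorem kthLeftmost_map_of_monotone {f : ℝ → ℝ} (hf : Monotone f) (ht : t ∈ Set.Icc 1 S.card) :
    kthLeftmost (S.map f) t = f (kthLeftmost S t) := by
  have hsort : (S.map f).sort (· ≤ ·) = (S.sort (· ≤ ·)).map f := by
    refine List.Perm.eq_of_pairwise' ((S.map f).pairwise_sort _)
      ((S.pairwise_sort (· ≤ ·)).map f fun _ _ h => hf h) ?_
    rw [← Multiset.coe_eq_coe, Multiset.sort_eq, ← Multiset.map_coe, Multiset.sort_eq]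
  have ht' : t ∈ Set.Icc 1 (S.map f).card := by rwa [Multiset.card_map]
  simp only [kthLeftmost_eq_getElem ht', kthLeftmost_eq_getElem ht, hsort, List.getElem_map]

theorem kthLeftmost_map_le_map {ι : Type*} {T : Multiset ι} {x x' : ι → ℝ}
    (h : ∀ i ∈ T, x i ≤ x' i) (ht : t ∈ Set.Icc 1 T.card) :
    kthLeftmost (T.map x) t ≤ kthLeftmost (T.map x') t := by
  set v := kthLeftmost (T.map x) t
  set v' := kthLeftmost (T.map x') t
  by_contra! hlt
  have hx : T.card < T.countP (v ≤ x ·) + t := by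
    have := card_lt_countP_kthLeftmost_le_add (S := T.map x) (by rwa [Multiset.card_map])
    rwa [Multiset.card_map, Multiset.countP_map, ← Multiset.countP_eq_card_filter] at this
  have hx' : t ≤ T.countP (x' · ≤ v') := by
    have := le_countP_le_kthLeftmost (S := T.map x') (by rwa [Multiset.card_map])
    rwa [Multiset.countP_map, ← Multiset.countP_eq_card_filter] at this
  have hdisj : T.countP (x' · ≤ v') ≤ T.countP (¬ v ≤ x ·) :=
    multiset_countP_mono_left fun i hi hi' => (((h i hi).trans hi').trans_lt hlt).not_ge
  have := T.card_eq_countP_add_countP (v ≤ x ·)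
  omega

/- `Set.uIcc p q` is `Set.Icc (p ⊓ q) (p ⊔ q)`, and the monotone maps `p ⊓ ·` and `p ⊔ ·` commute
with order statistics. -/
theorem kthLeftmost_map_mem_uIcc {ι : Type*} {T : Multiset ι} {x x' : ι → ℝ} {p : ℝ}
    (h : ∀ i ∈ T, x i ∈ Set.uIcc p (x' i)) (ht : t ∈ Set.Icc 1 T.card) :
    kthLeftmost (T.map x) t ∈ Set.uIcc p (kthLeftmost (T.map x') t) := by
  have ht' : t ∈ Set.Icc 1 (T.map x').card := by rwa [Multiset.card_map]
  constructor
  · rw [← kthLeftmost_map_of_monotone (fun _ _ h => inf_le_inf_left p h) ht', Multiset.map_map]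
    exact kthLeftmost_map_le_map (fun i hi => (h i hi).1) ht
  · rw [← kthLeftmost_map_of_monotone (fun _ _ h => sup_le_sup_left h p) ht', Multiset.map_map]
    exact kthLeftmost_map_le_map (fun i hi => (h i hi).2) ht

end OrderStatistics

section RankMechanism

variable {k m : ℕ} {ρ : ℕ → ℕ → ℕ} {σ : ℕ → Fin k → ℕ}

theorem FLSetting.groups_pos (S : FLSetting k m) : 0 < m :=
  (S.grp ⟨0, two_pos.trans_le S.hn⟩).pos

theorem groupSize_pos (S : FLSetting k m) (j : Fin m) : 0 < groupSize S j := by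
  obtain ⟨i, hi⟩ := S.surj j
  exact Finset.card_pos.2 ⟨i, by simp [hi]⟩

theorem card_groupMS (S : FLSetting k m) (x : Fin S.n → ℝ) (j : Fin m) :
    (groupMS S x j).card = groupSize S j := by
  rw [groupMS, Multiset.card_map, Finset.card_val, groupSize]

theorem card_repsMS (M : TwoPhase k) (S : FLSetting k m) (x : Fin S.n → ℝ) :
    (repsMS M S x).card = m := by
  rw [repsMS, Multiset.card_map, Finset.card_val, Finset.card_univ, Fintype.card_fin]

/-- The mechanism working with fixed ranks: with `m` groups, a group of `n` agents is represented
by its `ρ m n`-th leftmost member, and facility `ℓ` opens at the `σ m ℓ`-th leftmost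
representative. -/
def rankMech (ρ : ℕ → ℕ → ℕ) (σ : ℕ → Fin k → ℕ) : TwoPhase k where
  rep m S := kthLeftmost S (ρ m S.card)
  sel m R ℓ := kthLeftmost R (σ m ℓ)

theorem rankMech_valid (hρ : ∀ m n, 0 < n → ρ m n ∈ Set.Icc 1 n)
    (hσ : ∀ m, k ≤ m → ∀ ℓ, σ m ℓ ∈ Set.Icc 1 m) (hσ_mono : ∀ m, StrictMono (σ m)) :
    (rankMech ρ σ).Valid := by
  refine ⟨fun m S hS => kthLeftmost_mem (hρ m _ (Multiset.card_pos.2 hS)), ?_⟩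
  rintro _ R rfl hk
  exact ofFn_kthLeftmost_le (hσ_mono _) (hσ _ hk)

theorem rankMech_rep_mem_uIcc (hρ : ∀ n, 0 < n → ρ m n ∈ Set.Icc 1 n) (S : FLSetting k m)
    {x x' : Fin S.n → ℝ} {p : ℝ} (h : ∀ i, x i ∈ Set.uIcc p (x' i)) (j : Fin m) :
    (rankMech ρ σ).rep m (groupMS S x j) ∈
      Set.uIcc p ((rankMech ρ σ).rep m (groupMS S x' j)) := by
  simp only [rankMech, card_groupMS]
  exact kthLeftmost_map_mem_uIcc (fun i _ => h i) (hρ _ (groupSize_pos S j))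

theorem outcome_rankMech_mem_uIcc (hρ : ∀ n, 0 < n → ρ m n ∈ Set.Icc 1 n)
    (hσ : ∀ ℓ, σ m ℓ ∈ Set.Icc 1 m) (S : FLSetting k m)
    {x x' : Fin S.n → ℝ} {p : ℝ} (h : ∀ i, x i ∈ Set.uIcc p (x' i)) (ℓ : Fin k) :
    outcome (rankMech ρ σ) S x ℓ ∈ Set.uIcc p (outcome (rankMech ρ σ) S x' ℓ) :=
  kthLeftmost_map_mem_uIcc (fun j _ => rankMech_rep_mem_uIcc hρ S h j)
    (by simpa using hσ ℓ)

theorem rankMech_strategyproof {cost : ℝ → (Fin k → ℝ) → ℝ}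
    (hcost : ∀ p y y', (∀ ℓ, |p - y ℓ| ≤ |p - y' ℓ|) → cost p y ≤ cost p y')
    (hρ : ∀ m n, 0 < n → ρ m n ∈ Set.Icc 1 n)
    (hσ : ∀ m, k ≤ m → ∀ ℓ, σ m ℓ ∈ Set.Icc 1 m) : Strategyproof cost (rankMech ρ σ) := by
  intro m S x i a
  have hmove : ∀ i', x i' ∈ Set.uIcc (x i) (Function.update x i a i') := fun i' => by
    obtain rfl | hne := eq_or_ne i' i
    · exact Set.left_mem_uIcc
    · rw [Function.update_of_ne hne]
      exact Set.right_mem_uIcc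
  refine hcost _ _ _ fun ℓ => ?_
  rw [abs_sub_comm, abs_sub_comm (x i)]
  exact Set.abs_sub_left_of_mem_uIcc (outcome_rankMech_mem_uIcc (hρ m) (hσ m S.hmk) S hmove ℓ)

end RankMechanism

section AgentWeight

variable {k m : ℕ}

/-- The weight of agent `i` in the social cost, which is a weighted average over all agents. -/
def agentWeight (S : FLSetting k m) (i : Fin S.n) : ℝ :=
  1 / (m : ℝ) * (1 / (groupSize S (S.grp i) : ℝ))

theorem agentWeight_nonneg (S : FLSetting k m) (i : Fin S.n) : 0 ≤ agentWeight S i := by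
  rw [agentWeight]
  positivity

theorem sum_agentWeight_mul (S : FLSetting k m) (f : Fin S.n → ℝ) :
    ∑ i, agentWeight S i * f i =
      (1 / (m : ℝ)) * ∑ j, (1 / (groupSize S j : ℝ)) * ∑ i with S.grp i = j, f i := by
  rw [← Finset.sum_fiberwise Finset.univ S.grp, Finset.mul_sum]
  refine Finset.sum_congr rfl fun j _ => ?_
  rw [Finset.mul_sum, Finset.mul_sum]
  refine Finset.sum_congr rfl fun i hi => ?_
  rw [agentWeight, (Finset.mem_filter.1 hi).2, mul_assoc]

theorem SC_eq_sum_agentWeight_mul (cost : ℝ → (Fin k → ℝ) → ℝ) (S : FLSetting k m)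
    (x : Fin S.n → ℝ) (y : Fin k → ℝ) :
    SC cost S x y = ∑ i, agentWeight S i * cost (x i) y :=
  (sum_agentWeight_mul S fun i => cost (x i) y).symm

theorem sum_agentWeight (S : FLSetting k m) : ∑ i, agentWeight S i = 1 := by
  have hgroup : ∀ j, (1 / (groupSize S j : ℝ)) * ∑ i with S.grp i = j, (1 : ℝ) = 1 := fun j => by
    rw [Finset.sum_const, nsmul_one]
    exact one_div_mul_cancel (Nat.cast_ne_zero.2 (groupSize_pos S j).ne')
  have hm : (m : ℝ) ≠ 0 := Nat.cast_ne_zero.2 S.groups_pos.ne'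
  calc ∑ i, agentWeight S i = ∑ i, agentWeight S i * 1 := by simp only [mul_one]
    _ = 1 / (m : ℝ) * ∑ _j : Fin m, 1 := by
        rw [sum_agentWeight_mul, Finset.sum_congr rfl fun j _ => hgroup j]
    _ = 1 := by
        rw [Finset.sum_const, Finset.card_univ, Fintype.card_fin, nsmul_one, one_div_mul_cancel hm]

theorem mul_le_sum_agentWeight_filter (S : FLSetting k m) (x : Fin S.n → ℝ)
    {P : ℝ → Prop} [DecidablePred P] {Q : Fin m → Prop} [DecidablePred Q] {α β : ℝ}
    (hβ : 0 ≤ β) (hQ : α * m ≤ #{j | Q j})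
    (hP : ∀ j, Q j → β * groupSize S j ≤ (groupMS S x j).countP P) :
    α * β ≤ ∑ i with P (x i), agentWeight S i := by
  have hgroup : ∀ j, (if Q j then β else 0) ≤
      (1 / (groupSize S j : ℝ)) * ((groupMS S x j).countP P : ℝ) := fun j => by
    split_ifs with hj
    · rw [one_div_mul_eq_div, le_div_iff₀ (Nat.cast_pos.2 (groupSize_pos S j))]
      exact hP j hj
    · positivity
  have hcount : ∀ j, ∑ i with S.grp i = j, (if P (x i) then (1 : ℝ) else 0) =
      (groupMS S x j).countP P := fun j => by
    rw [Finset.sum_boole, groupMS, Multiset.countP_map]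
    rfl
  calc α * β ≤ (#{j | Q j} : ℝ) / m * β := by
        gcongr
        exact (le_div_iff₀ (Nat.cast_pos.2 S.groups_pos)).2 hQ
    _ = 1 / (m : ℝ) * ∑ j, if Q j then β else 0 := by
        rw [← Finset.sum_filter, Finset.sum_const, nsmul_eq_mul]
        ring
    _ ≤ 1 / (m : ℝ) * ∑ j, 1 / (groupSize S j : ℝ) * ((groupMS S x j).countP P : ℝ) := by
        gcongr with j
        exact hgroup j
    _ = ∑ i, agentWeight S i * if P (x i) then 1 else 0 := by
        rw [sum_agentWeight_mul]
        simp only [hcount]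
    _ = ∑ i with P (x i), agentWeight S i := by
        simp only [mul_ite, mul_one, mul_zero, Finset.sum_filter]

variable {ρ : ℕ → ℕ → ℕ} {σ : ℕ → Fin k → ℕ} {S : FLSetting k m} {θ : ℝ}

theorem mul_le_sum_agentWeight_le_outcome {ℓ : Fin k} (hρ : ∀ n, 0 < n → ρ m n ∈ Set.Icc 1 n)
    (hσ : σ m ℓ ∈ Set.Icc 1 m) (hθ : 0 ≤ θ)
    (hρθ : ∀ n, θ * n ≤ ρ m n) (x : Fin S.n → ℝ) :
    (σ m ℓ / m : ℝ) * θ ≤ ∑ i with x i ≤ outcome (rankMech ρ σ) S x ℓ, agentWeight S i := by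
  set z := outcome (rankMech ρ σ) S x ℓ
  refine mul_le_sum_agentWeight_filter S x (P := (· ≤ z))
    (Q := fun j => (rankMech ρ σ).rep m (groupMS S x j) ≤ z) hθ ?_ fun j hj => ?_
  · rw [div_mul_cancel₀ _ (Nat.cast_ne_zero.2 S.groups_pos.ne')]
    have hreps : σ m ℓ ≤ (repsMS (rankMech ρ σ) S x).countP (· ≤ z) :=
      le_countP_le_kthLeftmost (by rwa [card_repsMS])
    rw [repsMS, Multiset.countP_map] at hreps
    exact Nat.cast_le.2 hreps
  · have hcard := card_groupMS S x j
    have hgroup : ρ m (groupSize S j) ≤ (groupMS S x j).countP (· ≤ z) := by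
      rw [← hcard]
      exact (le_countP_le_kthLeftmost (hρ _ (hcard ▸ groupSize_pos S j))).trans
        (multiset_countP_mono_left fun _ _ h => h.trans hj)
    exact (hρθ _).trans (Nat.cast_le.2 hgroup)

theorem mul_le_sum_agentWeight_outcome_le {ℓ : Fin k} (hρ : ∀ n, 0 < n → ρ m n ∈ Set.Icc 1 n)
    (hσ : σ m ℓ ∈ Set.Icc 1 m) (hθ : 0 ≤ θ)
    (hρθ : ∀ n, ρ m n ≤ (1 - θ) * n + 1) (x : Fin S.n → ℝ) :
    ((m + 1 - σ m ℓ) / m : ℝ) * θ ≤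
      ∑ i with outcome (rankMech ρ σ) S x ℓ ≤ x i, agentWeight S i := by
  set z := outcome (rankMech ρ σ) S x ℓ
  refine mul_le_sum_agentWeight_filter S x (P := (z ≤ ·))
    (Q := fun j => z ≤ (rankMech ρ σ).rep m (groupMS S x j)) hθ ?_ fun j hj => ?_
  · rw [div_mul_cancel₀ _ (Nat.cast_ne_zero.2 S.groups_pos.ne'), sub_le_iff_le_add]
    have hreps : (repsMS (rankMech ρ σ) S x).card <
        (repsMS (rankMech ρ σ) S x).countP (z ≤ ·) + σ m ℓ :=
      card_lt_countP_kthLeftmost_le_add (by rwa [card_repsMS])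
    rw [card_repsMS, repsMS, Multiset.countP_map] at hreps
    exact_mod_cast hreps
  · have hcard := card_groupMS S x j
    have hgroup : groupSize S j < (groupMS S x j).countP (z ≤ ·) + ρ m (groupSize S j) := by
      rw [← hcard]
      exact (card_lt_countP_kthLeftmost_le_add (hρ _ (hcard ▸ groupSize_pos S j))).trans_le
        (Nat.add_le_add_right (multiset_countP_mono_left fun _ _ h => hj.trans h) _)
    have hgroup' : (groupSize S j : ℝ) + 1 ≤
        (groupMS S x j).countP (z ≤ ·) + ρ m (groupSize S j) := mod_cast hgroup
    linarith [hρθ (groupSize S j)]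

end AgentWeight

section WeightedAverage

variable {ι : Type*} {s : Finset ι} {w x : ι → ℝ} {a b c α : ℝ}

theorem mul_posPart_add_posPart_le_sum_mul_abs_sub (hw : ∀ i ∈ s, 0 ≤ w i) (hab : a ≤ b)
    (ha : α ≤ ∑ i ∈ s with x i ≤ a, w i) (hb : α ≤ ∑ i ∈ s with b ≤ x i, w i) :
    α * ((b - c)⁺ + (c - a)⁺) ≤ ∑ i ∈ s, w i * |x i - c| := by
  have hpoint : ∀ t, (b - c)⁺ * (if b ≤ t then 1 else 0) +
      (c - a)⁺ * (if t ≤ a then 1 else 0) ≤ |t - c| := fun t => by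
    simp only [posPart_def]
    split_ifs <;> grind
  calc α * ((b - c)⁺ + (c - a)⁺)
      ≤ (b - c)⁺ * ∑ i ∈ s with b ≤ x i, w i + (c - a)⁺ * ∑ i ∈ s with x i ≤ a, w i := by
        rw [mul_comm, add_mul]
        gcongr
    _ = ∑ i ∈ s, w i * ((b - c)⁺ * (if b ≤ x i then 1 else 0) +
          (c - a)⁺ * (if x i ≤ a then 1 else 0)) := by
        simp only [Finset.sum_filter, Finset.mul_sum, ← Finset.sum_add_distrib]
        refine Finset.sum_congr rfl fun i _ => ?_
        split_ifs <;> ring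
    _ ≤ ∑ i ∈ s, w i * |x i - c| :=
        Finset.sum_le_sum fun i hi => mul_le_mul_of_nonneg_left (hpoint _) (hw i hi)

theorem sum_mul_abs_sub_le_add {d : ℝ} (hw : ∀ i ∈ s, 0 ≤ w i) (hw1 : ∑ i ∈ s, w i = 1)
    (hcd : c ≤ d) (hdb : d ≤ b) (hb : α ≤ ∑ i ∈ s with b ≤ x i, w i) :
    ∑ i ∈ s, w i * |x i - d| ≤ ∑ i ∈ s, w i * |x i - c| + (1 - 2 * α) * (d - c) := by
  have hpoint : ∀ t, |t - d| ≤ |t - c| + (d - c) - 2 * (d - c) * (if b ≤ t then 1 else 0) :=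
    fun t => by split_ifs <;> grind
  calc ∑ i ∈ s, w i * |x i - d|
      ≤ ∑ i ∈ s, w i * (|x i - c| + (d - c) - 2 * (d - c) * (if b ≤ x i then 1 else 0)) :=
        Finset.sum_le_sum fun i hi => mul_le_mul_of_nonneg_left (hpoint _) (hw i hi)
    _ = ∑ i ∈ s, w i * |x i - c| + (∑ i ∈ s, w i) * (d - c)
          - 2 * (d - c) * ∑ i ∈ s with b ≤ x i, w i := by
        simp only [Finset.sum_filter, Finset.mul_sum, Finset.sum_mul, ← Finset.sum_add_distrib,
          ← Finset.sum_sub_distrib]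
        refine Finset.sum_congr rfl fun i _ => ?_
        split_ifs <;> ring
    _ ≤ ∑ i ∈ s, w i * |x i - c| + (1 - 2 * α) * (d - c) := by
        rw [hw1]
        linarith [mul_le_mul_of_nonneg_left hb (sub_nonneg.2 hcd)]

theorem mul_sum_mul_abs_sub_midpoint_add_le_of_le_midpoint (hw : ∀ i ∈ s, 0 ≤ w i)
    (hw1 : ∑ i ∈ s, w i = 1) (hα : α ∈ Set.Icc 0 (1 / 2)) (hab : a ≤ b) (hc : c ≤ (a + b) / 2)
    (ha : α ≤ ∑ i ∈ s with x i ≤ a, w i) (hb : α ≤ ∑ i ∈ s with b ≤ x i, w i) :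
    α * (∑ i ∈ s, w i * |x i - (a + b) / 2| + (b - a) / 2) ≤ ∑ i ∈ s, w i * |x i - c| := by
  obtain ⟨hα0, hα1⟩ := hα
  set D := ∑ i ∈ s, w i * |x i - c|
  have hmid : ∑ i ∈ s, w i * |x i - (a + b) / 2| ≤ D + (1 - 2 * α) * ((a + b) / 2 - c) :=
    sum_mul_abs_sub_le_add hw hw1 hc (by linarith) hb
  have hD : α * ((b - c)⁺ + (c - a)⁺) ≤ D :=
    mul_posPart_add_posPart_le_sum_mul_abs_sub hw hab ha hb
  have hDb : α * (b - c) ≤ D := le_trans (by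
    gcongr
    linarith [le_posPart (b - c), posPart_nonneg (c - a)]) hD
  have hDab : α * (b - a) ≤ D := le_trans (by
    gcongr
    linarith [le_posPart (b - c), le_posPart (c - a)]) hD
  calc α * (∑ i ∈ s, w i * |x i - (a + b) / 2| + (b - a) / 2)
      ≤ α * (D + (1 - 2 * α) * ((a + b) / 2 - c) + (b - a) / 2) := by gcongr
    _ = α * D + (1 - 2 * α) * (α * (b - c)) + α * (α * (b - a)) := by ring
    _ ≤ α * D + (1 - 2 * α) * D + α * D := by
        gcongr
        linarith
    _ = D := by ring

theorem mul_sum_mul_abs_sub_midpoint_add_le (hw : ∀ i ∈ s, 0 ≤ w i)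
    (hw1 : ∑ i ∈ s, w i = 1) (hα : α ∈ Set.Icc 0 (1 / 2)) (hab : a ≤ b)
    (ha : α ≤ ∑ i ∈ s with x i ≤ a, w i) (hb : α ≤ ∑ i ∈ s with b ≤ x i, w i) (c : ℝ) :
    α * (∑ i ∈ s, w i * |x i - (a + b) / 2| + (b - a) / 2) ≤ ∑ i ∈ s, w i * |x i - c| := by
  obtain hc | hc := le_total c ((a + b) / 2)
  · exact mul_sum_mul_abs_sub_midpoint_add_le_of_le_midpoint hw hw1 hα hab hc ha hb
  · have hneg : ∀ u v : ℝ, |-u - v| = |u - -v| := fun u v => by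
      rw [← abs_neg, neg_sub, sub_neg_eq_add, sub_neg_eq_add, add_comm]
    have hreflect := mul_sum_mul_abs_sub_midpoint_add_le_of_le_midpoint (x := fun i => -x i)
      (a := -b) (b := -a) (c := -c) hw hw1 hα (neg_le_neg hab) (by linarith)
      (by simpa only [neg_le_neg_iff] using hb) (by simpa only [neg_le_neg_iff] using ha)
    have hmid : -((-b + -a) / 2) = (a + b) / 2 := by ring
    simpa only [hneg, neg_neg, hmid, neg_sub_neg a b] using hreflect

end WeightedAverage

section MaxCost

theorem maxCost_le_maxCost {k : ℕ} (p : ℝ) (y y' : Fin k → ℝ) (h : ∀ ℓ, |p - y ℓ| ≤ |p - y' ℓ|) :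
    maxCost k p y ≤ maxCost k p y' :=
  ciSup_mono (Set.finite_range _).bddAbove h

theorem maxCost_two (p : ℝ) (y : Fin 2 → ℝ) : maxCost 2 p y = max |p - y 0| |p - y 1| := by
  have hbdd : BddAbove (Set.range fun ℓ => |p - y ℓ|) := (Set.finite_range _).bddAbove
  exact le_antisymm (ciSup_le (Fin.forall_fin_two.2 ⟨le_max_left _ _, le_max_right _ _⟩))
    (max_le (le_ciSup hbdd 0) (le_ciSup hbdd 1))

theorem max_abs_sub_eq_abs_sub_midpoint_add (p a b : ℝ) :
    max |p - a| |p - b| = |p - (a + b) / 2| + |b - a| / 2 := by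
  grind

theorem mul_SC_maxCost_two_le {m : ℕ} (S : FLSetting 2 m) (x : Fin S.n → ℝ) {z : Fin 2 → ℝ} {α : ℝ}
    (hα : α ∈ Set.Icc 0 (1 / 2)) (hz : z 0 ≤ z 1)
    (h0 : α ≤ ∑ i with x i ≤ z 0, agentWeight S i) (h1 : α ≤ ∑ i with z 1 ≤ x i, agentWeight S i)
    (y : Fin 2 → ℝ) : α * SC (maxCost 2) S x z ≤ SC (maxCost 2) S x y := by
  have hSC : SC (maxCost 2) S x z =
      ∑ i, agentWeight S i * |x i - (z 0 + z 1) / 2| + (z 1 - z 0) / 2 := by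
    simp only [SC_eq_sum_agentWeight_mul, maxCost_two, max_abs_sub_eq_abs_sub_midpoint_add, mul_add,
      Finset.sum_add_distrib, ← Finset.sum_mul, sum_agentWeight, one_mul,
      abs_of_nonneg (sub_nonneg.2 hz)]
  calc α * SC (maxCost 2) S x z ≤ ∑ i, agentWeight S i * |x i - (y 0 + y 1) / 2| := by
        rw [hSC]
        exact mul_sum_mul_abs_sub_midpoint_add_le (fun i _ => agentWeight_nonneg S i)
          (sum_agentWeight S) hα hz h0 h1 _
    _ ≤ SC (maxCost 2) S x y := by
        rw [SC_eq_sum_agentWeight_mul]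
        gcongr with i
        · exact agentWeight_nonneg S i
        · rw [maxCost_two, max_abs_sub_eq_abs_sub_midpoint_add]
          exact le_add_of_nonneg_right (by positivity)

end MaxCost

section MedianPair

/-- The fraction `⌊m / 2⌋ / m` of the groups whose representatives lie weakly to the left of both
facilities; it is `0` for `m = 0`. -/
def lowerHalfFraction (m : ℕ) : ℝ := ((m / 2 : ℕ) : ℝ) / m

theorem lowerHalfFraction_nonneg (m : ℕ) : 0 ≤ lowerHalfFraction m := by
  rw [lowerHalfFraction]
  positivity

theorem lowerHalfFraction_le_half (m : ℕ) : lowerHalfFraction m ≤ 1 / 2 := by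
  refine div_le_of_le_mul₀ m.cast_nonneg (by norm_num) ?_
  rw [one_div_mul_eq_div]
  exact Nat.cast_div_le

theorem two_ninths_le_lowerHalfFraction_mul {m : ℕ} (hm : 2 ≤ m) :
    2 / 9 ≤ lowerHalfFraction m * (1 - lowerHalfFraction m) := by
  have hthird : 1 / 3 ≤ lowerHalfFraction m := by
    rw [lowerHalfFraction, div_le_div_iff₀ three_pos (by positivity)]
    exact_mod_cast (show 1 * m ≤ m / 2 * 3 by omega)
  nlinarith [lowerHalfFraction_le_half m]

/-- The mechanism of the theorem. In the notation of `Mmech` it is, for each number `m` of groups,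
`M_m(1 - λ, λ, λ + 1 / m)` with `λ = lowerHalfFraction m`. -/
def medianPairMech : TwoPhase 2 :=
  rankMech (fun m n => ⌈(1 - lowerHalfFraction m) * n⌉₊) fun m ℓ => m / 2 + ℓ

theorem ceil_mul_mem_Icc {θ : ℝ} (hθ0 : 0 < θ) (hθ1 : θ ≤ 1) {n : ℕ} (hn : 0 < n) :
    ⌈θ * n⌉₊ ∈ Set.Icc 1 n :=
  ⟨Nat.one_le_ceil_iff.2 (mul_pos hθ0 (Nat.cast_pos.2 hn)),
    Nat.ceil_le.2 (mul_le_of_le_one_left n.cast_nonneg hθ1)⟩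

theorem ceil_one_sub_lowerHalfFraction_mul_mem_Icc (m n : ℕ) (hn : 0 < n) :
    ⌈(1 - lowerHalfFraction m) * n⌉₊ ∈ Set.Icc 1 n :=
  ceil_mul_mem_Icc (by linarith [lowerHalfFraction_le_half m])
    (sub_le_self 1 (lowerHalfFraction_nonneg m)) hn

theorem half_add_mem_Icc {m : ℕ} (hm : 2 ≤ m) (ℓ : Fin 2) : m / 2 + (ℓ : ℕ) ∈ Set.Icc 1 m := by
  rw [Set.mem_Icc]
  omega

theorem medianPairMech_valid : medianPairMech.Valid :=
  rankMech_valid ceil_one_sub_lowerHalfFraction_mul_mem_Icc (fun _ => half_add_mem_Icc)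
    fun _ _ _ h => Nat.add_lt_add_left h _

theorem medianPairMech_strategyproof : Strategyproof (maxCost 2) medianPairMech :=
  rankMech_strategyproof maxCost_le_maxCost ceil_one_sub_lowerHalfFraction_mul_mem_Icc
    fun _ => half_add_mem_Icc

theorem medianPairMech_SC_le {m : ℕ} (S : FLSetting 2 m) (x : Fin S.n → ℝ) (y : Fin 2 → ℝ) :
    SC (maxCost 2) S x (outcome medianPairMech S x) ≤ 9 / 2 * SC (maxCost 2) S x y := by
  have hrank := ceil_one_sub_lowerHalfFraction_mul_mem_Icc m
  have hnonneg := lowerHalfFraction_nonneg m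
  have hhalf := lowerHalfFraction_le_half m
  have hratio := two_ninths_le_lowerHalfFraction_mul S.hmk
  have hmem (ℓ : Fin 2) : m / 2 + (ℓ : ℕ) ∈ Set.Icc 1 (repsMS medianPairMech S x).card := by
    rw [card_repsMS]
    exact half_add_mem_Icc S.hmk ℓ
  have hle : outcome medianPairMech S x 0 ≤ outcome medianPairMech S x 1 :=
    kthLeftmost_mono (hmem 0) (hmem 1) (Nat.add_le_add_left zero_le_one _)
  have hleft : 2 / 9 ≤ ∑ i with x i ≤ outcome medianPairMech S x 0, agentWeight S i := by
    refine le_trans ?_ (mul_le_sum_agentWeight_le_outcome hrank (half_add_mem_Icc S.hmk 0)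
      (sub_nonneg.2 (hhalf.trans (by norm_num))) (fun n => Nat.le_ceil _) x)
    simpa [lowerHalfFraction] using hratio
  have hright : 2 / 9 ≤ ∑ i with outcome medianPairMech S x 1 ≤ x i, agentWeight S i := by
    refine le_trans ?_ (mul_le_sum_agentWeight_outcome_le hrank (half_add_mem_Icc S.hmk 1)
      hnonneg (fun n => (Nat.ceil_lt_add_one (mul_nonneg (by linarith) n.cast_nonneg)).le) x)
    have hm : (m : ℝ) ≠ 0 := Nat.cast_ne_zero.2 S.groups_pos.ne'
    have hfrac : ((m : ℝ) + 1 - (m / 2 + ((1 : Fin 2) : ℕ) : ℕ)) / m = 1 - lowerHalfFraction m := by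
      rw [lowerHalfFraction, Fin.val_one, Nat.cast_add, Nat.cast_one,
        add_sub_add_right_eq_sub, sub_div, div_self hm]
    rw [hfrac, mul_comm]
    exact hratio
  have hSC := mul_SC_maxCost_two_le S x (by norm_num) hle hleft hright y
  linarith

end MedianPair

theorem stmt8_general :
    ∃ M : TwoPhase 2, M.Valid ∧ Strategyproof (maxCost 2) M ∧
      ∀ (m : ℕ) (S : FLSetting 2 m) (x : Fin S.n → ℝ) (y : Fin 2 → ℝ),
        SC (maxCost 2) S x (outcome M S x) ≤ (9 / 2) * SC (maxCost 2) S x y :=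
  ⟨medianPairMech, medianPairMech_valid, medianPairMech_strategyproof,
    fun _ => medianPairMech_SC_le⟩

/-- In the max-variant with two facilities there is a strategyproof two-phase mechanism
with approximation ratio at most `9/2`. -/
theorem stmt8 :
    ∃ M : TwoPhase 2, M.Valid ∧ Strategyproof (maxCost 2) M ∧
      ∀ (m : ℕ) (S : FLSetting 2 m) (x : Fin S.n → ℝ) (y : Fin 2 → ℝ), Feasible S x y →
        SC (maxCost 2) S x (outcome M S x) ≤ (9 / 2) * SC (maxCost 2) S x y :=
  let ⟨M, hvalid, hsp, hSC⟩ := stmt8_general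
  ⟨M, hvalid, hsp, fun m S x y _ => hSC m S x y⟩

end
end

section
/- In the max-variant with k = 2 facilities, for every even m ≥ 2 and every ε ∈ (0, 1/m], the mechanism M_m(1/2, 1/2, 1/2 + ε), which opens the facilities at the two median representative locations, has approximation ratio at most 4: on every instance with m groups its output has social cost at most 4 times the minimum social cost over all feasible solutions. -/
open Finset

noncomputable section

/-!
Writing `c` for the midpoint of `y`, `maxCost 2 a y = |a - c| + |y 0 - y 1| / 2`, so the max-variant
is a single-facility problem at the midpoint plus a constant. Let `A` be the average cost of `c`
alone, a lower bound for the cost of `y`, and let `p` be the midpoint of the outcome `u`, `v`. For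
even `m` both `u` and `v`, hence also `p`, are medians of the representatives `r j`, which are
medians of their groups. A median lies between `c` and at least half of the values, and this gives

* `𝔼 j, |r j - c| ≤ 2 * A`, so `max |c - u| |c - v|` and `|u - v|`, both at most twice this average,
  are at most `4 * A`;
* the average cost of `p` alone is at most `A + |p - c| / 2`, because `p` is no worse than `c` for
  the half of the groups whose representative lies on the other side of `p`.

As `max |c - u| |c - v| = |p - c| + |u - v| / 2`, the outcome costs at most
`A + |p - c| / 2 + |u - v| / 2 = A + max |c - u| |c - v| / 2 + |u - v| / 4 ≤ 4 * A`.
-/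

section Median

variable {ι α : Type*} [LinearOrder α] {s : Finset ι} {x : ι → α} {u v w : α}

/-- `v` is a median of the family `x` over `s`: at least half of the values are at most `v` and at
least half are at least `v`. A family of even size has a whole interval of medians. -/
def IsMedian (s : Finset ι) (x : ι → α) (v : α) : Prop :=
  #s ≤ 2 * #{i ∈ s | x i ≤ v} ∧ #s ≤ 2 * #{i ∈ s | v ≤ x i}

lemma IsMedian.of_mem_uIcc (hu : IsMedian s x u) (hv : IsMedian s x v) (hw : w ∈ Set.uIcc u v) :
    IsMedian s x w := by
  have below : ∀ {a}, IsMedian s x a → a ≤ w → #s ≤ 2 * #{i ∈ s | x i ≤ w} := fun ha haw ↦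
    ha.1.trans <| Nat.mul_le_mul_left 2 <| card_le_card <|
      monotone_filter_right s fun _ _ hi ↦ hi.trans haw
  have above : ∀ {a}, IsMedian s x a → w ≤ a → #s ≤ 2 * #{i ∈ s | w ≤ x i} := fun ha hwa ↦
    ha.2.trans <| Nat.mul_le_mul_left 2 <| card_le_card <|
      monotone_filter_right s fun _ _ hi ↦ hwa.trans hi
  rcases Set.mem_uIcc.1 hw with ⟨huw, hwv⟩ | ⟨hvw, hwu⟩
  · exact ⟨below hu huw, above hv hwv⟩
  · exact ⟨below hv hvw, above hu hwu⟩

lemma IsMedian.exists_majority_mem_uIcc (hv : IsMedian s x v) (c : α) :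
    ∃ t ⊆ s, #s ≤ 2 * #t ∧ ∀ i ∈ t, v ∈ Set.uIcc c (x i) := by
  rcases le_total c v with hcv | hvc
  · exact ⟨_, filter_subset _ _, hv.2, fun i hi ↦ Set.mem_uIcc_of_le hcv (mem_filter.1 hi).2⟩
  · exact ⟨_, filter_subset _ _, hv.1, fun i hi ↦ Set.mem_uIcc_of_ge (mem_filter.1 hi).2 hvc⟩

end Median

section Average

open scoped BigOperators

variable {ι κ α : Type*} [Field α] [LinearOrder α] [IsStrictOrderedRing α]

lemma expect_le_expect_add_half_of_majority {s t : Finset ι} (hs : s.Nonempty) (hts : t ⊆ s)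
    (ht : #s ≤ 2 * #t) {f g : ι → α} {a b : α} (hba : b ≤ a) (hs_le : ∀ i ∈ s, f i ≤ g i + a)
    (ht_le : ∀ i ∈ t, f i ≤ g i + b) :
    𝔼 i ∈ s, f i ≤ 𝔼 i ∈ s, g i + (a + b) / 2 := by
  classical
  have hs_pos : (0 : α) < #s := mod_cast hs.card_pos
  have half_le : (1 / 2 : α) ≤ #t / #s := by
    have : (#s : α) ≤ 2 * #t := mod_cast ht
    rw [le_div_iff₀ hs_pos]
    linarith
  have le_ite : ∀ i ∈ s, f i ≤ g i + (a + if i ∈ t then b - a else 0) := fun i hi ↦ by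
    split_ifs with hit
    · simpa only [add_sub_cancel] using ht_le i hit
    · simpa only [add_zero] using hs_le i hi
  calc 𝔼 i ∈ s, f i
      ≤ 𝔼 i ∈ s, (g i + (a + if i ∈ t then b - a else 0)) := expect_le_expect le_ite
    _ = 𝔼 i ∈ s, g i + (a + #t / #s * (b - a)) := by
      rw [expect_add_distrib, expect_add_distrib, expect_const hs,
        expect_eq_sum_div_card _ (fun i ↦ ite (i ∈ t) _ _), sum_ite_mem, inter_eq_right.2 hts,
        sum_const, nsmul_eq_mul, mul_div_right_comm]
    _ ≤ 𝔼 i ∈ s, g i + (a + 1 / 2 * (b - a)) := by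
      gcongr _ + (_ + ?_)
      exact mul_le_mul_of_nonpos_right half_le (sub_nonpos.2 hba)
    _ = 𝔼 i ∈ s, g i + (a + b) / 2 := by ring

lemma abs_sub_eq_add_of_mem_uIcc {a b c : α} (h : c ∈ Set.uIcc a b) :
    |b - a| = |b - c| + |c - a| := by
  rw [← sub_add_sub_cancel b c a, abs_add_eq_add_abs_iff]
  simp only [sub_nonneg, sub_nonpos]
  exact (Set.mem_uIcc.1 h).imp And.symm id

lemma IsMedian.expect_abs_sub_le_of_mem_uIcc {s : Finset ι} {x : ι → α} {v c z : α}
    (hv : IsMedian s x v) (hz : z ∈ Set.uIcc c v) :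
    𝔼 i ∈ s, |x i - z| ≤ 𝔼 i ∈ s, |x i - c| := by
  rcases s.eq_empty_or_nonempty with rfl | hs
  · simp only [expect_empty, le_refl]
  obtain ⟨t, hts, ht, hvt⟩ := hv.exists_majority_mem_uIcc c
  have near : ∀ i ∈ s, |x i - z| ≤ |x i - c| + |z - c| := fun i _ ↦
    abs_sub_comm c z ▸ abs_sub_le (x i) c z
  have nearer : ∀ i ∈ t, |x i - z| ≤ |x i - c| + -|z - c| := fun i hi ↦ by
    rw [abs_sub_eq_add_of_mem_uIcc (Set.uIcc_subset_uIcc_left (hvt i hi) hz), add_neg_cancel_right]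
  simpa only [add_neg_cancel, zero_div, add_zero] using
    expect_le_expect_add_half_of_majority hs hts ht (neg_le_self (abs_nonneg _)) near nearer

lemma IsMedian.abs_sub_le_two_mul_expect {s : Finset ι} (hs : s.Nonempty) {x : ι → α} {v : α}
    (hv : IsMedian s x v) (c : α) : |v - c| ≤ 2 * 𝔼 i ∈ s, |x i - c| := by
  obtain ⟨t, hts, ht, hvt⟩ := hv.exists_majority_mem_uIcc c
  have far : ∀ i ∈ t, 0 ≤ |x i - c| + -|v - c| := fun i hi ↦ by
    rw [abs_sub_eq_add_of_mem_uIcc (hvt i hi), add_neg_cancel_right]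
    exact abs_nonneg _
  have := expect_le_expect_add_half_of_majority hs hts ht (neg_nonpos.2 (abs_nonneg _))
    (fun i _ ↦ add_nonneg (abs_nonneg (x i - c)) le_rfl) far
  rw [expect_const_zero] at this
  linarith

lemma abs_sub_midpoint_add_half_eq_max (a u v : α) :
    |a - (u + v) / 2| + |u - v| / 2 = max |a - u| |a - v| := by
  grind

section MedianOfMedians

variable {t : Finset κ} {s : κ → Finset ι} {x : ι → α} {r : κ → α} {u v : α}

lemma IsMedian.expect_expect_abs_sub_le (ht : t.Nonempty) (hs : ∀ j ∈ t, (s j).Nonempty)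
    (hr : ∀ j ∈ t, IsMedian (s j) x (r j)) (hv : IsMedian t r v) (c : α) :
    𝔼 j ∈ t, 𝔼 i ∈ s j, |x i - v| ≤ 𝔼 j ∈ t, 𝔼 i ∈ s j, |x i - c| + |v - c| / 2 := by
  obtain ⟨t', ht't, ht', hvt'⟩ := hv.exists_majority_mem_uIcc c
  have all_le : ∀ j ∈ t, 𝔼 i ∈ s j, |x i - v| ≤ 𝔼 i ∈ s j, |x i - c| + |v - c| := fun j hj ↦ by
    rw [← expect_const (hs j hj) |v - c|, ← expect_add_distrib, abs_sub_comm v c]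
    exact expect_le_expect fun i _ ↦ abs_sub_le _ _ _
  have majority_le : ∀ j ∈ t', 𝔼 i ∈ s j, |x i - v| ≤ 𝔼 i ∈ s j, |x i - c| + 0 := fun j hj ↦ by
    simpa only [add_zero] using (hr j (ht't hj)).expect_abs_sub_le_of_mem_uIcc (hvt' j hj)
  simpa only [add_zero] using
    expect_le_expect_add_half_of_majority ht ht't ht' (abs_nonneg _) all_le majority_le

lemma expect_expect_abs_sub_midpoint_add_half_le (ht : t.Nonempty) (hs : ∀ j ∈ t, (s j).Nonempty)
    (hr : ∀ j ∈ t, IsMedian (s j) x (r j)) (hu : IsMedian t r u) (hv : IsMedian t r v) (c : α) :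
    𝔼 j ∈ t, 𝔼 i ∈ s j, |x i - (u + v) / 2| + |u - v| / 2 ≤
      4 * 𝔼 j ∈ t, 𝔼 i ∈ s j, |x i - c| := by
  have reps_le : 𝔼 j ∈ t, |r j - c| ≤ 2 * 𝔼 j ∈ t, 𝔼 i ∈ s j, |x i - c| := by
    rw [mul_expect]
    exact expect_le_expect fun j hj ↦ (hr j hj).abs_sub_le_two_mul_expect (hs j hj) c
  have far_le : |(u + v) / 2 - c| + |u - v| / 2 ≤ 2 * 𝔼 j ∈ t, |r j - c| := by
    rw [abs_sub_comm _ c, abs_sub_midpoint_add_half_eq_max, abs_sub_comm c, abs_sub_comm c]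
    exact max_le (hu.abs_sub_le_two_mul_expect ht c) (hv.abs_sub_le_two_mul_expect ht c)
  have gap_le : |u - v| ≤ 2 * 𝔼 j ∈ t, |r j - c| :=
    (hu.abs_sub_le_two_mul_expect ht v).trans <| mul_le_mul_of_nonneg_left
      (hv.expect_abs_sub_le_of_mem_uIcc Set.right_mem_uIcc) zero_le_two
  have mid_mem : (u + v) / 2 ∈ Set.uIcc u v := by
    rw [Set.mem_uIcc]
    rcases le_total u v with h | h
    · left; constructor <;> linarith
    · right; constructor <;> linarith
  have mid_le := (hu.of_mem_uIcc hv mid_mem).expect_expect_abs_sub_le ht hs hr c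
  linarith

end MedianOfMedians

end Average

lemma lt_countP_le_getElem {α : Type*} [Preorder α] [DecidableLE α] {l : List α}
    (hl : l.SortedLE) {k : ℕ} (hk : k < l.length) : k < l.countP (· ≤ l[k]) := by
  have take_le : ∀ a ∈ l.take (k + 1), decide (a ≤ l[k]) = true := fun a ha ↦ by
    obtain ⟨i, hi, rfl⟩ := List.mem_take_iff_getElem.1 ha
    exact decide_eq_true (hl.getElem_le_getElem_of_le (by omega))
  calc k < (l.take (k + 1)).length := by rw [List.length_take]; omega
    _ = (l.take (k + 1)).countP (· ≤ l[k]) := (List.countP_eq_length.2 take_le).symm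
    _ ≤ l.countP (· ≤ l[k]) := (List.take_sublist _ _).countP_le

lemma length_le_countP_getElem_le_add {α : Type*} [Preorder α] [DecidableLE α] {l : List α}
    (hl : l.SortedLE) {k : ℕ} (hk : k < l.length) : l.length ≤ l.countP (l[k] ≤ ·) + k := by
  have le_drop : ∀ a ∈ l.drop k, decide (l[k] ≤ a) = true := fun a ha ↦ by
    obtain ⟨i, hi, rfl⟩ := List.mem_drop_iff_getElem.1 ha
    exact decide_eq_true (hl.getElem_le_getElem_of_le (by omega))
  calc l.length = (l.drop k).length + k := by rw [List.length_drop]; omega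
    _ = (l.drop k).countP (l[k] ≤ ·) + k := by rw [List.countP_eq_length.2 le_drop]
    _ ≤ l.countP (l[k] ≤ ·) + k := by gcongr; exact (List.drop_sublist _ _).countP_le

lemma isMedian_kthLeftmost {ι : Type*} {s : Finset ι} {x : ι → ℝ} {t : ℕ} (hst : #s ≤ 2 * t)
    (hts : 2 * t ≤ #s + 2) : IsMedian s x (kthLeftmost (s.val.map x) t) := by
  rcases s.eq_empty_or_nonempty with rfl | hs
  · simp only [IsMedian, card_empty, zero_le, and_self]
  have hs_pos := hs.card_pos
  obtain ⟨l, hl⟩ : ∃ l, l = (s.val.map x).sort (· ≤ ·) := ⟨_, rfl⟩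
  have hcount : ∀ (p : ℝ → Prop) [DecidablePred p], l.countP p = #{i ∈ s | p (x i)} := fun p _ ↦ by
    rw [hl, ← Multiset.coe_countP, Multiset.sort_eq, Multiset.countP_map, card_def, filter_val]
  have hlength : l.length = #s := by rw [hl, Multiset.length_sort, Multiset.card_map, card_val]
  have hsorted : l.SortedLE := hl ▸ (Multiset.pairwise_sort _ _).sortedLE
  -- The bounds on `t` force `1 ≤ t ≤ #s`, so the default value in `kthLeftmost` is never reached.
  have hlt : t - 1 < l.length := by omega
  have hle := lt_countP_le_getElem hsorted hlt
  have hge := length_le_countP_getElem_le_add hsorted hlt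
  rw [hcount] at hle hge
  rw [kthLeftmost, ← hl, List.getD_eq_getElem _ _ hlt]
  constructor <;> omega

section SocialCost

open scoped BigOperators

lemma maxCost_two_eq (a : ℝ) (y : Fin 2 → ℝ) :
    maxCost 2 a y = |a - (y 0 + y 1) / 2| + |y 0 - y 1| / 2 := by
  rw [abs_sub_midpoint_add_half_eq_max]
  refine le_antisymm (ciSup_le <| Fin.forall_fin_two.2 ⟨le_max_left _ _, le_max_right _ _⟩) ?_
  exact max_le (le_ciSup (f := fun ℓ ↦ |a - y ℓ|) (Set.finite_range _).bddAbove 0)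
    (le_ciSup (f := fun ℓ ↦ |a - y ℓ|) (Set.finite_range _).bddAbove 1)

variable {k m : ℕ}

lemma SC_eq_expect (cost : ℝ → (Fin k → ℝ) → ℝ) (S : FLSetting k m) (x : Fin S.n → ℝ)
    (y : Fin k → ℝ) : SC cost S x y = 𝔼 j, 𝔼 i with S.grp i = j, cost (x i) y := by
  simp only [SC, groupSize, expect_eq_sum_div_card, card_univ, Fintype.card_fin, one_div,
    inv_mul_eq_div]

lemma FLSetting.group_nonempty (S : FLSetting k m) (j : Fin m) :
    (univ.filter fun i ↦ S.grp i = j).Nonempty := by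
  obtain ⟨i, hi⟩ := S.surj j
  exact ⟨i, mem_filter.2 ⟨mem_univ i, hi⟩⟩

lemma FLSetting.groups_nonempty (S : FLSetting k m) : (univ : Finset (Fin m)).Nonempty :=
  ⟨S.grp ⟨0, by have := S.hn; omega⟩, mem_univ _⟩

lemma SC_maxCost_two_eq (S : FLSetting 2 m) (x : Fin S.n → ℝ) (y : Fin 2 → ℝ) :
    SC (maxCost 2) S x y =
      𝔼 j, 𝔼 i with S.grp i = j, |x i - (y 0 + y 1) / 2| + |y 0 - y 1| / 2 := by
  simp only [SC_eq_expect, maxCost_two_eq, expect_add_distrib, expect_const (S.group_nonempty _),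
    expect_const S.groups_nonempty]

lemma SC_maxCost_le_four_mul_of_isMedian (S : FLSetting 2 m) {x : Fin S.n → ℝ} {r : Fin m → ℝ}
    (hr : ∀ j, IsMedian (univ.filter fun i ↦ S.grp i = j) x (r j)) {w : Fin 2 → ℝ}
    (hw : ∀ ℓ, IsMedian univ r (w ℓ)) (y : Fin 2 → ℝ) :
    SC (maxCost 2) S x w ≤ 4 * SC (maxCost 2) S x y := by
  rw [SC_maxCost_two_eq, SC_maxCost_two_eq]
  refine (expect_expect_abs_sub_midpoint_add_half_le S.groups_nonempty
    (fun j _ ↦ S.group_nonempty j) (fun j _ ↦ hr j) (hw 0) (hw 1) ((y 0 + y 1) / 2)).trans ?_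
  gcongr
  exact le_add_of_nonneg_right (by positivity)

end SocialCost

section NatCeil

variable {α : Type*} [Field α] [LinearOrder α] [IsStrictOrderedRing α] [FloorSemiring α] {m : ℕ}

lemma le_two_mul_natCeil {z : α} (hz : 1 / 2 ≤ z) : m ≤ 2 * ⌈z * m⌉₊ := by
  have : (m : α) ≤ 2 * ⌈z * m⌉₊ := by
    linarith [Nat.le_ceil (z * m), mul_le_mul_of_nonneg_right hz m.cast_nonneg]
  exact_mod_cast this

variable (α m) in
lemma two_mul_natCeil_half_le : 2 * ⌈(1 / 2 : α) * m⌉₊ ≤ m + 2 := by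
  have : (2 * ⌈(1 / 2 : α) * m⌉₊ : α) ≤ m + 2 := by
    linarith [Nat.ceil_lt_add_one (a := (1 / 2 : α) * m) (by positivity)]
  exact_mod_cast this

lemma two_mul_natCeil_half_add_le (hm : Even m) {ε : α} (hε : ε * m ≤ 1) :
    2 * ⌈(1 / 2 + ε) * m⌉₊ ≤ m + 2 := by
  obtain ⟨q, rfl⟩ := hm
  have : ⌈(1 / 2 + ε) * (q + q : ℕ)⌉₊ ≤ q + 1 := by
    rw [Nat.ceil_le]
    push_cast at hε ⊢
    linarith
  omega

end NatCeil

section Mechanism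

variable {k m : ℕ}

lemma isMedian_rep_Mmech_half (l r : ℝ) (S : FLSetting k m) (x : Fin S.n → ℝ) (j : Fin m) :
    IsMedian (univ.filter fun i ↦ S.grp i = j) x ((Mmech (1 / 2) l r).rep m (groupMS S x j)) := by
  simp only [Mmech, groupMS, Multiset.card_map, card_val]
  exact isMedian_kthLeftmost (le_two_mul_natCeil le_rfl) (two_mul_natCeil_half_le ℝ _)

lemma isMedian_kthLeftmost_repsMS (M : TwoPhase k) (S : FLSetting k m) (x : Fin S.n → ℝ) {t : ℕ}
    (hmt : m ≤ 2 * t) (htm : 2 * t ≤ m + 2) :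
    IsMedian univ (fun j ↦ M.rep m (groupMS S x j)) (kthLeftmost (repsMS M S x) t) :=
  isMedian_kthLeftmost (by rwa [card_fin]) (by rwa [card_fin])

theorem stmt9_general (hm : Even m) {ε : ℝ} (hε : ε ∈ Set.Icc (0 : ℝ) (1 / m))
    (S : FLSetting 2 m) (x : Fin S.n → ℝ) (y : Fin 2 → ℝ) :
    SC (maxCost 2) S x (outcome (Mmech (1 / 2) (1 / 2) (1 / 2 + ε)) S x) ≤
      4 * SC (maxCost 2) S x y := by
  have hεm : ε * m ≤ 1 := mul_le_of_le_div₀ zero_le_one m.cast_nonneg hε.2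
  have left_isMedian := isMedian_kthLeftmost_repsMS (Mmech (1 / 2) (1 / 2) (1 / 2 + ε)) S x
    (le_two_mul_natCeil (le_refl (1 / 2 : ℝ))) (two_mul_natCeil_half_le ℝ m)
  have right_isMedian := isMedian_kthLeftmost_repsMS (Mmech (1 / 2) (1 / 2) (1 / 2 + ε)) S x
    (le_two_mul_natCeil (le_add_of_nonneg_right hε.1)) (two_mul_natCeil_half_add_le hm hεm)
  exact SC_maxCost_le_four_mul_of_isMedian S (isMedian_rep_Mmech_half _ _ S x)
    (Fin.forall_fin_two.2 ⟨left_isMedian, right_isMedian⟩) y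

end Mechanism

/-- In the max-variant with two facilities, for every even `m ≥ 2` and `ε ∈ (0, 1/m]`,
the mechanism `M_m(1/2, 1/2, 1/2 + ε)` has approximation ratio at most `4`. -/
theorem stmt9 (m : ℕ) (hm : 2 ≤ m) (hmeven : Even m) (ε : ℝ)
    (hε : ε ∈ Set.Ioc (0 : ℝ) (1 / (m : ℝ)))
    (S : FLSetting 2 m) (x : Fin S.n → ℝ) (y : Fin 2 → ℝ) (hy : Feasible S x y) :
    SC (maxCost 2) S x (outcome (Mmech (1 / 2) (1 / 2) (1 / 2 + ε)) S x)
      ≤ 4 * SC (maxCost 2) S x y := by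
  exact stmt9_general hmeven (Set.Ioc_subset_Icc_self hε) S x y

end
end

section
/- Consider the max-variant with k = 2 facilities and a strategyproof two-phase mechanism. For real numbers a < b and positive integers x and y, let g_{a,b}(x,y) denote the multiset of positions with x copies of a and y copies of b. Then: (1) if the mechanism's representative function chooses a on g_{a,b}(x,y), it must choose a′ on g_{a′,b}(x,y) for every a′ ∈ [a,b), and a on g_{a,b′}(x,y) for every b′ ∈ (a,b]; (2) if it chooses b on g_{a,b}(x,y), it must choose b′ on g_{a,b′}(x,y) for every b′ ∈ (a,b], and b on g_{a′,b}(x,y) for every a′ ∈ [a,b). -/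
open Finset

noncomputable section

/-!
When all `m` groups are copies of one group, every representative, hence every facility, sits at
that group's representative location. Agents sharing a position `p` can deviate one after another,
each step being unprofitable at `p`, so strategyproofness says: if all agents at `p` report
something else, the representative does not get closer to `p`. For `g_{a,b}(x,y)` this means that a
chosen `a` stays chosen when the agents at `a` move to a point closer to `a` than to `b`, or when
the agents at `b` move by less than `b - a`. A single such move of `a` cannot pass the midpoint, but
`b` can first be pushed away and brought back afterwards; in this way every pair `a' < b'` is
reached. Hence whether the left or the right location is chosen does not depend on the pair at all,
and since one of the two is always chosen, the claim for `b` is the contrapositive of that for `a`.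
-/

lemma StrategyproofOn.cost_le_of_coalition {k m : ℕ} {cost : ℝ → (Fin k → ℝ) → ℝ}
    {M : TwoPhase k} (hSP : StrategyproofOn cost M m) (S : FLSetting k m) {p : ℝ}
    {z z' : Fin S.n → ℝ} (hz : ∀ i, z i = p ∨ z' i = z i) :
    cost p (outcome M S z) ≤ cost p (outcome M S z') := by
  suffices h : ∀ T : Finset (Fin S.n),
      cost p (outcome M S z) ≤ cost p (outcome M S (T.piecewise z' z)) by
    simpa only [Finset.piecewise_univ] using h Finset.univ
  intro T
  induction T using Finset.induction_on with
  | empty => rw [Finset.piecewise_empty]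
  | insert j T hj ih =>
    have hzj : T.piecewise z' z j = z j := Finset.piecewise_eq_of_notMem T z' z hj
    rw [Finset.piecewise_insert]
    rcases hz j with hp | hsame
    · have hdev := hSP S (T.piecewise z' z) j (z' j)
      rw [hzj, hp] at hdev
      exact ih.trans hdev
    · rwa [hsame, ← hzj, Function.update_eq_self]

section UniformSetting

variable {k m N : ℕ}

/-- The setting with `m` groups of `N` agents each, where agent `g * N + t` is the `t`-th agent of
group `g`. -/
def uniformSetting (hkm : k ≤ m) (hN : 2 ≤ m * N) : FLSetting k m where
  n := m * N
  hn := hN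
  hmk := hkm
  grp := Fin.divNat
  surj g := ⟨finProdFinEquiv (g, ⟨0, Nat.pos_of_mul_pos_left (by omega : 0 < m * N)⟩),
    congrArg Prod.fst (finProdFinEquiv.symm_apply_apply _)⟩

/-- The profile of `uniformSetting` in which every group has the positions `w`. -/
def uniformProfile (m : ℕ) (w : Fin N → ℝ) : Fin (m * N) → ℝ := fun i => w i.modNat

lemma filter_divNat_eq_map (g : Fin m) :
    (Finset.univ.filter fun i : Fin (m * N) => i.divNat = g) =
      Finset.univ.map ((Function.Embedding.sectR g (Fin N)).trans finProdFinEquiv.toEmbedding) := by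
  ext i
  obtain ⟨⟨h, t⟩, rfl⟩ := finProdFinEquiv.surjective i
  have hdiv : (finProdFinEquiv (h, t)).divNat = h :=
    congrArg Prod.fst (finProdFinEquiv.symm_apply_apply (h, t))
  simp [hdiv, eq_comm]

lemma groupMS_uniform (hkm : k ≤ m) (hN : 2 ≤ m * N) (w : Fin N → ℝ) (g : Fin m) :
    groupMS (uniformSetting hkm hN) (uniformProfile m w) g = Finset.univ.val.map w := by
  have hmod (t : Fin N) : (finProdFinEquiv (g, t)).modNat = t :=
    congrArg Prod.snd (finProdFinEquiv.symm_apply_apply (g, t))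
  calc groupMS (uniformSetting hkm hN) (uniformProfile m w) g
      = (Finset.univ.filter fun i : Fin (m * N) => i.divNat = g).val.map (uniformProfile m w) := rfl
    _ = Finset.univ.val.map fun t => w (finProdFinEquiv (g, t)).modNat := by
      rw [filter_divNat_eq_map, Finset.map_val, Multiset.map_map]
      rfl
    _ = Finset.univ.val.map w := by simp only [hmod]

lemma TwoPhase.Valid.outcome_uniform {M : TwoPhase k} (hV : M.Valid) (hkm : k ≤ m)
    (hN : 2 ≤ m * N) (w : Fin N → ℝ) :
    outcome M (uniformSetting hkm hN) (uniformProfile m w) =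
      fun _ => M.rep m (Finset.univ.val.map w) := by
  let r := M.rep m (Finset.univ.val.map w)
  have hreps : repsMS M (uniformSetting hkm hN) (uniformProfile m w) = Multiset.replicate m r := by
    simp only [repsMS, groupMS_uniform, Multiset.map_const', Finset.card_val, Finset.card_univ,
      Fintype.card_fin, r]
  have hle := hV.2 m (Multiset.replicate m r) (Multiset.card_replicate m r) hkm
  funext l
  change M.sel m (repsMS M _ _) l = r
  rw [hreps]
  exact Multiset.eq_of_mem_replicate (Multiset.mem_of_le hle (by simp))

lemma StrategyproofOn.cost_rep_le_of_coalition {cost : ℝ → (Fin k → ℝ) → ℝ} {M : TwoPhase k}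
    (hSP : StrategyproofOn cost M m) (hV : M.Valid) (hkm : k ≤ m) (hN : 2 ≤ m * N) {p : ℝ}
    {w w' : Fin N → ℝ} (hw : ∀ t, w t = p ∨ w' t = w t) :
    cost p (fun _ => M.rep m (Finset.univ.val.map w)) ≤
      cost p (fun _ => M.rep m (Finset.univ.val.map w')) := by
  rw [← hV.outcome_uniform hkm hN w, ← hV.outcome_uniform hkm hN w']
  exact hSP.cost_le_of_coalition (uniformSetting hkm hN) fun i => hw (Fin.modNat i)

end UniformSetting

/-- A cost function *reflects distance* if, among outcomes with all facilities in one place, an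
agent weakly prefers one only if it is at least as close. The max-variant enters only through this
property. -/
def ReflectsDistance {k : ℕ} (cost : ℝ → (Fin k → ℝ) → ℝ) : Prop :=
  ∀ p q r : ℝ, cost p (fun _ => q) ≤ cost p (fun _ => r) → |p - q| ≤ |p - r|

lemma reflectsDistance_maxCost (k : ℕ) [NeZero k] : ReflectsDistance (maxCost k) :=
  fun p q r h => by simpa only [maxCost, ciSup_const] using h

/-- The group `g_{a,b}(x,y)` with `x` agents at `a` and `y` agents at `b`. -/
def twoPointGroup (x y : ℕ) (a b : ℝ) : Multiset ℝ :=
  Multiset.replicate x a + Multiset.replicate y b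

lemma twoPointGroup_comm (x y : ℕ) (a b : ℝ) : twoPointGroup x y a b = twoPointGroup y x b a :=
  add_comm _ _

lemma map_append_const_eq_twoPointGroup (x y : ℕ) (a b : ℝ) :
    Finset.univ.val.map (Fin.append (fun _ : Fin x => a) fun _ : Fin y => b) =
      twoPointGroup x y a b := by
  rw [Fin.univ_val_map, List.ofFn_fin_append, List.ofFn_const, List.ofFn_const]
  rfl

lemma TwoPhase.Valid.rep_twoPointGroup {k : ℕ} {M : TwoPhase k} (hV : M.Valid) (m : ℕ) {x y : ℕ}
    (hxy : 0 < x + y) (a b : ℝ) :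
    M.rep m (twoPointGroup x y a b) = a ∨ M.rep m (twoPointGroup x y a b) = b := by
  have hne : twoPointGroup x y a b ≠ 0 := by
    rw [← Multiset.card_pos]
    simpa [twoPointGroup] using hxy
  exact (Multiset.mem_add.mp (hV.1 m _ hne)).imp Multiset.eq_of_mem_replicate
    Multiset.eq_of_mem_replicate

/-- Closure of a relation `P a b` under the two moves allowed by strategyproofness: `a` may move to
a point closer to `a` than to `b`, and `b` to a point closer to `b` than `a` is. With `P a b`
meaning that `a` is chosen in `g_{a,b}(x,y)`, this isolates the geometry from the mechanism. -/
structure ClosedUnderCloserMoves (P : ℝ → ℝ → Prop) : Prop where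
  move_left {a b a' : ℝ} : P a b → |a' - a| < |a' - b| → P a' b
  move_right {a b b' : ℝ} : P a b → |b - b'| < |b - a| → P a b'

namespace ClosedUnderCloserMoves

variable {P : ℝ → ℝ → Prop} {a b a' b' : ℝ}

lemma left_of_lt (hP : ClosedUnderCloserMoves P) (h : P a b) (hab : a < b) (hab' : a' < b) :
    P a' b := by
  rcases le_or_gt a' a with hle | hlt
  · refine hP.move_left h ?_
    rw [abs_of_nonpos (by linarith), abs_of_neg (by linarith)]
    linarith
  · -- Pushing `b` away by `a' - a` puts `a'` before the midpoint.
    have hpush : P a (b + (a' - a)) := hP.move_right h <| by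
      rw [abs_of_neg (by linarith), abs_of_pos (by linarith)]
      linarith
    have hmove : P a' (b + (a' - a)) := hP.move_left hpush <| by
      rw [abs_of_pos (by linarith), abs_of_neg (by linarith)]
      linarith
    refine hP.move_right hmove ?_
    rw [abs_of_pos (by linarith), abs_of_pos (by linarith)]
    linarith

lemma right_of_lt (hP : ClosedUnderCloserMoves P) (h : P a b) (hab : a < b) (hab' : a < b') :
    P a b' := by
  rcases le_or_gt b' b with hle | hlt
  · refine hP.move_right h ?_
    rw [abs_of_nonneg (by linarith), abs_of_pos (by linarith)]
    linarith
  · -- Pushing `a` away by `b' - b` brings `b'` within reach of `b`.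
    have hpush : P (a - (b' - b)) b := hP.left_of_lt h hab (by linarith)
    have hmove : P (a - (b' - b)) b' := hP.move_right hpush <| by
      rw [abs_of_neg (by linarith), abs_of_pos (by linarith)]
      linarith
    exact hP.left_of_lt hmove (by linarith) hab'

lemma of_lt_of_lt (hP : ClosedUnderCloserMoves P) (h : P a b) (hab : a < b) (hab' : a' < b') :
    P a' b' := by
  have hminb : min a a' < b := min_lt_of_left_lt hab
  have hminb' : min a a' < b' := min_lt_of_right_lt hab'
  exact hP.left_of_lt (hP.right_of_lt (hP.left_of_lt h hab hminb) hminb hminb') hminb' hab'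

end ClosedUnderCloserMoves

section StrategyproofRepresentative

variable {k m x y : ℕ} {cost : ℝ → (Fin k → ℝ) → ℝ} {M : TwoPhase k}

lemma StrategyproofOn.abs_sub_rep_le (hSP : StrategyproofOn cost M m)
    (hcost : ReflectsDistance cost) (hV : M.Valid) (hkm : k ≤ m) (hN : 2 ≤ m * (x + y))
    (a a' b : ℝ) :
    |a - M.rep m (twoPointGroup x y a b)| ≤ |a - M.rep m (twoPointGroup x y a' b)| := by
  apply hcost
  rw [← map_append_const_eq_twoPointGroup, ← map_append_const_eq_twoPointGroup]
  refine hSP.cost_rep_le_of_coalition hV hkm hN fun t => ?_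
  induction t using Fin.addCases with
  | left t => exact Or.inl (Fin.append_left _ _ t)
  | right t => exact Or.inr (by rw [Fin.append_right, Fin.append_right])

lemma StrategyproofOn.closedUnderCloserMoves (hSP : StrategyproofOn cost M m)
    (hcost : ReflectsDistance cost) (hV : M.Valid) (hkm : k ≤ m) (hN : 2 ≤ m * (x + y)) :
    ClosedUnderCloserMoves fun a b => M.rep m (twoPointGroup x y a b) = a := by
  have hxy : 0 < x + y := Nat.pos_of_mul_pos_left (by omega : 0 < m * (x + y))
  constructor
  · intro a b a' ha hlt
    refine (hV.rep_twoPointGroup m hxy a' b).resolve_right fun hb => ?_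
    have hdev := hSP.abs_sub_rep_le hcost hV hkm hN a' a b
    rw [hb, ha] at hdev
    exact hdev.not_gt hlt
  · intro a b b' ha hlt
    refine (hV.rep_twoPointGroup m hxy a b').resolve_right fun hb' => ?_
    have hdev := hSP.abs_sub_rep_le hcost hV hkm (add_comm x y ▸ hN) b b' a
    rw [twoPointGroup_comm, ha, twoPointGroup_comm, hb'] at hdev
    exact hdev.not_gt hlt

theorem stmt11_general (hcost : ReflectsDistance cost) (hV : M.Valid)
    (hSP : StrategyproofOn cost M m) (hkm : k ≤ m) (hN : 2 ≤ m * (x + y)) {a b a' b' : ℝ}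
    (hab : a < b) (hab' : a' < b') :
    (M.rep m (twoPointGroup x y a b) = a → M.rep m (twoPointGroup x y a' b') = a') ∧
      (M.rep m (twoPointGroup x y a b) = b → M.rep m (twoPointGroup x y a' b') = b') := by
  have hP := hSP.closedUnderCloserMoves hcost hV hkm hN
  have hxy : 0 < x + y := Nat.pos_of_mul_pos_left (by omega : 0 < m * (x + y))
  refine ⟨fun ha => hP.of_lt_of_lt ha hab hab', fun hb => ?_⟩
  refine (hV.rep_twoPointGroup m hxy a' b').resolve_left fun ha' => hab.ne ?_
  exact (hP.of_lt_of_lt ha' hab' hab).symm.trans hb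

end StrategyproofRepresentative

/-- Continuity property of the representative function of a strategyproof mechanism in the
max-variant with two facilities, for the group `g_{a,b}(x,y)` with `x` agents at `a` and
`y` agents at `b`. -/
theorem stmt11 (M : TwoPhase 2) (hV : M.Valid) (hSP : Strategyproof (maxCost 2) M)
    (m : ℕ) (hm : 2 ≤ m) (a b : ℝ) (hab : a < b) (x y : ℕ) (hx : 0 < x) (hy : 0 < y) :
    (M.rep m (Multiset.replicate x a + Multiset.replicate y b) = a →
      (∀ a' ∈ Set.Ico a b, M.rep m (Multiset.replicate x a' + Multiset.replicate y b) = a') ∧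
      (∀ b' ∈ Set.Ioc a b, M.rep m (Multiset.replicate x a + Multiset.replicate y b') = a)) ∧
    (M.rep m (Multiset.replicate x a + Multiset.replicate y b) = b →
      (∀ b' ∈ Set.Ioc a b, M.rep m (Multiset.replicate x a + Multiset.replicate y b') = b') ∧
      (∀ a' ∈ Set.Ico a b, M.rep m (Multiset.replicate x a' + Multiset.replicate y b) = b)) := by
  have hN : 2 ≤ m * (x + y) := hm.trans (Nat.le_mul_of_pos_right m (by omega))
  have key {a' b' : ℝ} (hab' : a' < b') :=
    stmt11_general (reflectsDistance_maxCost 2) hV (hSP m) hm hN hab hab'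
  exact ⟨fun ha => ⟨fun _ ha' => (key ha'.2).1 ha, fun _ hb' => (key hb'.1).1 ha⟩,
    fun hb => ⟨fun _ hb' => (key hb'.1).2 hb, fun _ ha' => (key ha'.2).2 hb⟩⟩

end
end

section
/- The algorithm A*_max is not strategyproof in the max-variant with k = 2 facilities: there exists an instance (with m = 3 groups of two agents each) and an agent who, by misreporting her position, strictly decreases her individual cost measured at her true position. -/
open Finset

noncomputable section

/-- The algorithm `A✶_max` for two facilities: each group's representative is the position
of its `⌈n_g/2⌉`-th leftmost agent; one facility is opened at the `⌈m/2⌉`-th leftmost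
representative location `w₁`, and the other at a representative location other than `w₁`
that is closest to `w₁`. -/
def AmaxAlg : TwoPhase 2 where
  rep := fun _ S => kthLeftmost S ((Multiset.card S + 1) / 2)
  sel := fun m R =>
    let w1 := kthLeftmost R ((m + 1) / 2)
    ![w1, (((R.erase w1).sort (· ≤ ·)).argmin (fun z => |z - w1|)).getD 0]

/-! The representative of a pair is its left agent, so in the pair `(0, 4)` the agent at `4` only
influences the outcome by reporting a position left of `0`. With the other representatives at `2`
and `5`, the truthful facilities are `2` and its nearest neighbour `0`, at distance `4` from that
agent. Reporting `-2` pushes her representative further from `2` than `5` is, so the second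
facility moves to `5` and her cost drops to `2`. -/

lemma argmin_pair {α β : Type*} [LinearOrder β] (f : α → β) (a b : α) :
    [a, b].argmin f = some (if f b < f a then b else a) := by
  rw [List.argmin_cons, List.argmin_singleton, apply_ite some]

lemma kthLeftmost_coe {l : List ℝ} (hl : l.Pairwise (· ≤ ·)) (t : ℕ) :
    kthLeftmost l t = l.getD (t - 1) 0 := by
  rw [kthLeftmost, Multiset.coe_sort, List.mergeSort_eq_self _ (by simpa using hl)]

lemma AmaxAlg_rep_pair (m : ℕ) (a b : ℝ) : AmaxAlg.rep m {a, b} = min a b := by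
  wlog hab : a ≤ b generalizing a b
  · rw [Multiset.pair_comm, min_comm, this b a (le_of_not_ge hab)]
  have leftmost : kthLeftmost {a, b} 1 = a :=
    kthLeftmost_coe (l := [a, b]) (by simpa using hab) 1
  simp only [AmaxAlg, Multiset.card_pair, Nat.reduceAdd, Nat.reduceDiv, leftmost, min_eq_left hab]

lemma AmaxAlg_sel_three {a b c : ℝ} (hab : a ≤ b) (hbc : b ≤ c) :
    AmaxAlg.sel 3 {a, b, c} = ![b, if c - b < b - a then c else a] := by
  have median : kthLeftmost {a, b, c} 2 = b :=
    kthLeftmost_coe (l := [a, b, c]) (by simp [hab, hbc, hab.trans hbc]) 2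
  have others : (({a, b, c} : Multiset ℝ).erase b).sort (· ≤ ·) = [a, c] := by
    have median_first : ({a, b, c} : Multiset ℝ) = b ::ₘ {a, c} := Multiset.cons_swap a b {c}
    rw [median_first, Multiset.erase_cons_head]
    exact List.mergeSort_eq_self _ (by simpa using hab.trans hbc)
  simp only [AmaxAlg, Nat.reduceAdd, Nat.reduceDiv, median, others, argmin_pair,
    Option.getD_some, abs_of_nonneg (sub_nonneg.2 hbc), abs_of_nonpos (sub_nonpos.2 hab), neg_sub]

lemma abs_sub_le_maxCost {k : ℕ} (p : ℝ) (y : Fin k → ℝ) (ℓ : Fin k) :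
    |p - y ℓ| ≤ maxCost k p y :=
  le_ciSup (f := fun ℓ => |p - y ℓ|) (Set.finite_range _).bddAbove ℓ

lemma maxCost_le {k : ℕ} [NeZero k] {p c : ℝ} {y : Fin k → ℝ} (h : ∀ ℓ, |p - y ℓ| ≤ c) :
    maxCost k p y ≤ c :=
  ciSup_le h

lemma repsMS_three {k : ℕ} (M : TwoPhase k) (S : FLSetting k 3) (x : Fin S.n → ℝ) :
    repsMS M S x =
      {M.rep 3 (groupMS S x 0), M.rep 3 (groupMS S x 1), M.rep 3 (groupMS S x 2)} :=
  rfl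

/-- The partition of six agents into three pairs of consecutive agents, reducible so that
`Fin threePairs.n` is recognised as `Fin 6`. -/
abbrev threePairs : FLSetting 2 3 where
  n := 6
  hn := by norm_num
  hmk := by norm_num
  grp := ![0, 0, 1, 1, 2, 2]
  surj := by decide

lemma groupSize_threePairs (j : Fin 3) : groupSize threePairs j = 2 := by
  decide +revert

lemma outcome_threePairs (x : Fin threePairs.n → ℝ) :
    outcome AmaxAlg threePairs x =
      AmaxAlg.sel 3 {min (x 0) (x 1), min (x 2) (x 3), min (x 4) (x 5)} := by
  have pair₀ : groupMS threePairs x 0 = {x 0, x 1} := rfl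
  have pair₁ : groupMS threePairs x 1 = {x 2, x 3} := rfl
  have pair₂ : groupMS threePairs x 2 = {x 4, x 5} := rfl
  rw [outcome, repsMS_three, pair₀, pair₁, pair₂]
  simp only [AmaxAlg_rep_pair]

/-- The positions of the six agents of `threePairs` in the counterexample, as a function of the
report `r` of agent `1`, whose true position is `4`. -/
def profile (r : ℝ) : Fin threePairs.n → ℝ := ![0, r, 2, 2, 5, 5]

lemma update_profile (r r' : ℝ) : Function.update (profile r) 1 r' = profile r' := by
  ext i
  fin_cases i <;> rfl

lemma outcome_profile (r : ℝ) :
    outcome AmaxAlg threePairs (profile r) = ![2, if min 0 r < -1 then 5 else min 0 r] := by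
  have reps : outcome AmaxAlg threePairs (profile r) =
      AmaxAlg.sel 3 {min 0 r, min 2 2, min 5 5} := outcome_threePairs (profile r)
  have switch : (5 : ℝ) - 2 < 2 - min 0 r ↔ min 0 r < -1 := by
    constructor <;> intro h <;> linarith
  rw [reps, min_self, min_self,
    AmaxAlg_sel_three ((min_le_left 0 r).trans zero_le_two) (by norm_num)]
  simp only [switch]

/-- The algorithm `A✶_max` is not strategyproof in the max-variant with two facilities:
on some instance with `m = 3` groups of two agents each, some agent strictly decreases
her individual cost (measured at her true position) by misreporting. -/
theorem stmt13 :
    ∃ (S : FLSetting 2 3) (x : Fin S.n → ℝ) (i : Fin S.n) (x' : ℝ),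
      (∀ j : Fin 3, groupSize S j = 2) ∧
      maxCost 2 (x i) (outcome AmaxAlg S (Function.update x i x'))
        < maxCost 2 (x i) (outcome AmaxAlg S x) := by
  refine ⟨threePairs, profile 4, 1, -2, groupSize_threePairs, ?_⟩
  have truthful : outcome AmaxAlg threePairs (profile 4) = ![2, 0] := by
    rw [outcome_profile]; norm_num
  have deviating : outcome AmaxAlg threePairs (Function.update (profile 4) 1 (-2)) = ![2, 5] := by
    rw [update_profile, outcome_profile]; norm_num
  calc maxCost 2 4 (outcome AmaxAlg threePairs (Function.update (profile 4) 1 (-2)))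
      = maxCost 2 4 ![2, 5] := by rw [deviating]
    _ ≤ 2 := maxCost_le (Fin.forall_fin_two.2 ⟨by norm_num, by norm_num [abs_le]⟩)
    _ < |4 - ![2, 0] 1| := by norm_num
    _ ≤ maxCost 2 4 ![2, 0] := abs_sub_le_maxCost 4 ![2, 0] 1
    _ = maxCost 2 4 (outcome AmaxAlg threePairs (profile 4)) := by rw [truthful]

end
end

section
/- In the sum-variant, for every k ≥ 3 facilities, the mechanism M_k^sum has approximation ratio at most 3 + 2/k: on every instance with m ≥ k groups, its output has social cost at most (3 + 2/k) times the minimum social cost over all feasible solutions. -/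
open Finset

noncomputable section

/-- The mechanism `M_k^sum`: each group's representative is the position of its
`⌈n_g/2⌉`-th leftmost agent, and for each `ℓ ∈ {1,…,k}` the `ℓ`-th facility is opened
at the `⌈ℓm/(k+1)⌉`-th leftmost representative location. -/
def MsumMech (k : ℕ) : TwoPhase k where
  rep := fun _ S => kthLeftmost S ((Multiset.card S + 1) / 2)
  sel := fun m R ℓ => kthLeftmost R ⌈(((ℓ.val + 1) * m : ℕ) : ℝ) / ((k : ℝ) + 1)⌉₊

/-!
The distance `|u - v|` is the length of the set of thresholds `t` separating `u` from `v`, so it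
suffices to compare, for each `t`, the costs that count the agent-facility pairs `t` separates.
Give an agent of a group `g` the weight `1 / (m n_g)`, and let the weight `a` of the agents left of
`t` be at most `1/2` (the other case is its mirror image). Having `q` of the `k` facilities left of
`t` costs `a (k - q) + (1 - a) q = a k + (1 - 2 a) q`, which is at least `a k` for every `q`. At
most a proportion `2 a` of the representatives lie left of `t`, since each of them is a median and
brings half of its group along. As the mechanism picks evenly spaced representatives, it opens at
most `2 a (k + 1)` facilities there and pays at most `a k + 2 a (k + 1) = (3 + 2 / k) a k`.
-/

section OrderStatistics

theorem getElem_iff_lt_countP {α : Type*} {p : α → Bool} {l : List α}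
    (hl : l.Pairwise fun a b => p b → p a) {i : ℕ} (hi : i < l.length) :
    p l[i] ↔ i < l.countP p := by
  induction l generalizing i with
  | nil => simp at hi
  | cons a l ih =>
    rw [List.pairwise_cons] at hl
    by_cases ha : p a
    · cases i with
      | zero => simp [ha]
      | succ i => simpa [ha] using ih hl.2 (by simpa using hi)
    · have hnone : ∀ b ∈ a :: l, ¬ p b := by
        simpa [ha] using fun b hb => mt (hl.1 b hb) ha
      simpa [List.countP_eq_zero.2 hnone] using hnone _ (List.getElem_mem hi)

theorem kthLeftmost_lt_iff {R : Multiset ℝ} {t : ℝ} {j : ℕ} (hj : 1 ≤ j)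
    (hjR : j ≤ Multiset.card R) : kthLeftmost R j < t ↔ j ≤ R.countP (· < t) := by
  have hlen : j - 1 < (R.sort (· ≤ ·)).length := by
    rw [Multiset.length_sort]; omega
  have hsorted : (R.sort (· ≤ ·)).Pairwise fun a b => decide (b < t) → decide (a < t) :=
    (R.pairwise_sort (· ≤ ·)).imp fun hab => by simpa using hab.trans_lt
  have hcount : (R.sort (· ≤ ·)).countP (· < t) = R.countP (· < t) := by
    rw [← Multiset.coe_countP, Multiset.sort_eq]
  have := getElem_iff_lt_countP hsorted hlen
  rw [hcount, decide_eq_true_eq] at this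
  rw [kthLeftmost, List.getD_eq_getElem _ _ hlen, this]
  omega

/-- The lower median of a multiset of reals: the representative that `MsumMech` chooses. -/
def lowerMedian (R : Multiset ℝ) : ℝ := kthLeftmost R ((Multiset.card R + 1) / 2)

theorem lowerMedian_lt_iff {R : Multiset ℝ} (hR : R ≠ 0) (t : ℝ) :
    lowerMedian R < t ↔ Multiset.card R ≤ 2 * R.countP (· < t) := by
  have hpos := Multiset.card_pos.2 hR
  rw [lowerMedian, kthLeftmost_lt_iff (by omega) (by omega)]
  omega

variable {k : ℕ} {R : Multiset ℝ}

theorem MsumMech_sel_lt_iff (hR : R ≠ 0) (t : ℝ) (ℓ : Fin k) :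
    (MsumMech k).sel (Multiset.card R) R ℓ < t ↔
      (ℓ.val + 1) * Multiset.card R ≤ R.countP (· < t) * (k + 1) := by
  have hpos := Multiset.card_pos.2 hR
  have hk : (0 : ℝ) < (k : ℝ) + 1 := by positivity
  change kthLeftmost R _ < t ↔ _
  rw [kthLeftmost_lt_iff, Nat.ceil_le, div_le_iff₀ hk]
  · exact_mod_cast Iff.rfl
  · rw [Nat.one_le_ceil_iff]
    positivity
  · rw [Nat.ceil_le, div_le_iff₀ hk, mul_comm (ℓ.val + 1)]
    exact_mod_cast Nat.mul_le_mul_left _ (by omega)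

theorem card_MsumMech_sel_lt (hR : R ≠ 0) (t : ℝ) :
    #{ℓ | (MsumMech k).sel (Multiset.card R) R ℓ < t} =
      min k (R.countP (· < t) * (k + 1) / Multiset.card R) := by
  simp only [MsumMech_sel_lt_iff hR, ← Nat.le_div_iff_mul_le (Multiset.card_pos.2 hR),
    Nat.succ_le_iff]
  exact Fin.card_filter_val_lt

theorem card_MsumMech_sel_lt_mul_le (hR : R ≠ 0) (t : ℝ) :
    #{ℓ | (MsumMech k).sel (Multiset.card R) R ℓ < t} * Multiset.card R ≤
      R.countP (· < t) * (k + 1) := by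
  rw [card_MsumMech_sel_lt hR]
  exact (Nat.mul_le_mul_right _ (min_le_right _ _)).trans (Nat.div_mul_le_self _ _)

theorem countP_mul_le_card_MsumMech_sel_lt_add_one_mul (hR : R ≠ 0) (t : ℝ) :
    R.countP (· < t) * (k + 1) ≤
      (#{ℓ | (MsumMech k).sel (Multiset.card R) R ℓ < t} + 1) * Multiset.card R := by
  rw [card_MsumMech_sel_lt hR]
  rcases min_choice k (R.countP (· < t) * (k + 1) / Multiset.card R) with h | h <;> rw [h]
  · rw [mul_comm]
    exact Nat.mul_le_mul_left _ (Multiset.countP_le_card _ _)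
  · exact ((Nat.div_lt_iff_lt_mul (Multiset.card_pos.2 hR)).1 (Nat.lt_succ_self _)).le

end OrderStatistics

namespace FLSetting

theorem numGroups_pos {k m : ℕ} (S : FLSetting k m) : 0 < m :=
  Fin.pos (S.grp ⟨0, two_pos.trans_le S.hn⟩)

variable {k m : ℕ} (S : FLSetting k m)

theorem card_groupMS (x : Fin S.n → ℝ) (j : Fin m) :
    Multiset.card (groupMS S x j) = groupSize S j :=
  Multiset.card_map _ _

theorem groupSize_pos (j : Fin m) : 0 < groupSize S j := by
  obtain ⟨i, hi⟩ := S.surj j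
  exact card_pos.2 ⟨i, by simp [hi]⟩

theorem groupMS_ne_zero (x : Fin S.n → ℝ) (j : Fin m) : groupMS S x j ≠ 0 :=
  Multiset.card_pos.1 (S.card_groupMS x j ▸ S.groupSize_pos j)

theorem card_repsMS (M : TwoPhase k) (x : Fin S.n → ℝ) : Multiset.card (repsMS M S x) = m := by
  simp [repsMS]

theorem repsMS_ne_zero (M : TwoPhase k) (x : Fin S.n → ℝ) : repsMS M S x ≠ 0 :=
  Multiset.card_pos.1 (S.numGroups_pos.trans_eq (S.card_repsMS M x).symm)

/-- The share of agent `i` in the social cost; these weights form a probability distribution in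
which all groups have the same mass. -/
def weight (i : Fin S.n) : ℝ := 1 / (m * groupSize S (S.grp i))

/-- The total weight of the agents strictly to the left of the threshold `t`. -/
def massLeft (x : Fin S.n → ℝ) (t : ℝ) : ℝ := ∑ i with x i < t, S.weight i

theorem sum_weight_mul (f : Fin S.n → ℝ) :
    ∑ i, S.weight i * f i =
      (1 / (m : ℝ)) * ∑ j, (1 / (groupSize S j : ℝ)) * ∑ i with S.grp i = j, f i := by
  rw [← sum_fiberwise _ S.grp, mul_sum]
  refine sum_congr rfl fun j _ => ?_
  rw [mul_sum, mul_sum]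
  refine sum_congr rfl fun i hi => ?_
  rw [weight, (mem_filter.1 hi).2]
  ring

theorem SC_eq_sum_weight (cost : ℝ → (Fin k → ℝ) → ℝ) (x : Fin S.n → ℝ) (y : Fin k → ℝ) :
    SC cost S x y = ∑ i, S.weight i * cost (x i) y :=
  (S.sum_weight_mul fun i => cost (x i) y).symm

theorem weight_nonneg (i : Fin S.n) : 0 ≤ S.weight i := by
  unfold weight; positivity

theorem sum_weight : ∑ i, S.weight i = 1 := by
  have hgroup (j : Fin m) : (1 / (groupSize S j : ℝ)) * ∑ i with S.grp i = j, (1 : ℝ) = 1 := by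
    have := S.groupSize_pos j
    rw [sum_const, nsmul_one]
    exact one_div_mul_cancel (by positivity)
  have hm : (m : ℝ) ≠ 0 := by exact_mod_cast S.numGroups_pos.ne'
  have h := S.sum_weight_mul fun _ => 1
  simp only [hgroup] at h
  simpa [hm] using h

theorem massLeft_nonneg (x : Fin S.n → ℝ) (t : ℝ) : 0 ≤ S.massLeft x t :=
  sum_nonneg fun i _ => S.weight_nonneg i

theorem massLeft_le_one (x : Fin S.n → ℝ) (t : ℝ) : S.massLeft x t ≤ 1 :=
  (sum_le_univ_sum_of_nonneg S.weight_nonneg).trans_eq S.sum_weight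

theorem numGroups_mul_massLeft (x : Fin S.n → ℝ) (t : ℝ) :
    m * S.massLeft x t = ∑ j, ((groupMS S x j).countP (· < t) : ℝ) / groupSize S j := by
  have hm : (m : ℝ) ≠ 0 := by exact_mod_cast S.numGroups_pos.ne'
  have hcount (j : Fin m) :
      ∑ i with S.grp i = j, (if x i < t then (1 : ℝ) else 0) =
        (groupMS S x j).countP (· < t) := by
    rw [sum_boole, groupMS, Multiset.countP_map]
    rfl
  have h := S.sum_weight_mul fun i => if x i < t then 1 else 0
  simp only [mul_ite, mul_one, mul_zero, ← sum_filter, hcount] at h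
  rw [massLeft, h, ← mul_assoc, mul_one_div_cancel hm, one_mul]
  exact sum_congr rfl fun j _ => one_div_mul_eq_div _ _

theorem ite_lowerMedian_lt_le (x : Fin S.n → ℝ) (t : ℝ) (j : Fin m) :
    (if lowerMedian (groupMS S x j) < t then 1 else 0 : ℝ) ≤
      2 * ((groupMS S x j).countP (· < t) / groupSize S j) := by
  split_ifs with h
  · have hpos : (0 : ℝ) < groupSize S j := by exact_mod_cast S.groupSize_pos j
    rw [lowerMedian_lt_iff (S.groupMS_ne_zero x j), S.card_groupMS] at h
    rw [← mul_div_assoc, one_le_div hpos]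
    exact_mod_cast h
  · positivity

theorem le_one_add_ite_lowerMedian_lt (x : Fin S.n → ℝ) (t : ℝ) (j : Fin m) :
    2 * ((groupMS S x j).countP (· < t) / groupSize S j : ℝ) ≤
      1 + if lowerMedian (groupMS S x j) < t then 1 else 0 := by
  have hpos : (0 : ℝ) < groupSize S j := by exact_mod_cast S.groupSize_pos j
  rw [← mul_div_assoc, div_le_iff₀ hpos]
  split_ifs with h
  · have hle : (groupMS S x j).countP (· < t) ≤ groupSize S j :=
      (Multiset.countP_le_card _ _).trans_eq (S.card_groupMS x j)
    rw [one_add_one_eq_two]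
    exact_mod_cast Nat.mul_le_mul_left 2 hle
  · rw [lowerMedian_lt_iff (S.groupMS_ne_zero x j), S.card_groupMS, not_le] at h
    rw [add_zero, one_mul]
    exact_mod_cast h.le

theorem countP_repsMS_eq_sum_ite (x : Fin S.n → ℝ) (t : ℝ) :
    ((repsMS (MsumMech k) S x).countP (· < t) : ℝ) =
      ∑ j, if lowerMedian (groupMS S x j) < t then 1 else 0 := by
  rw [repsMS, Multiset.countP_map, sum_boole]
  rfl

theorem countP_repsMS_le_two_mul_massLeft (x : Fin S.n → ℝ) (t : ℝ) :
    ((repsMS (MsumMech k) S x).countP (· < t) : ℝ) ≤ 2 * (m * S.massLeft x t) := by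
  rw [countP_repsMS_eq_sum_ite, numGroups_mul_massLeft, mul_sum]
  exact sum_le_sum fun j _ => S.ite_lowerMedian_lt_le x t j

theorem two_mul_massLeft_le_add_countP_repsMS (x : Fin S.n → ℝ) (t : ℝ) :
    2 * (m * S.massLeft x t) ≤ m + (repsMS (MsumMech k) S x).countP (· < t) := by
  rw [countP_repsMS_eq_sum_ite, numGroups_mul_massLeft, mul_sum]
  refine (sum_le_sum fun j _ => S.le_one_add_ite_lowerMedian_lt x t j).trans_eq ?_
  simp [sum_add_distrib]

theorem card_outcome_lt_le (x : Fin S.n → ℝ) (t : ℝ) :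
    (#{ℓ | outcome (MsumMech k) S x ℓ < t} : ℝ) ≤ 2 * S.massLeft x t * (k + 1) := by
  have hm : (0 : ℝ) < m := by exact_mod_cast S.numGroups_pos
  have hsel : (#{ℓ | outcome (MsumMech k) S x ℓ < t} * m : ℝ) ≤
      (repsMS (MsumMech k) S x).countP (· < t) * (k + 1) := by
    have h := card_MsumMech_sel_lt_mul_le (k := k) (S.repsMS_ne_zero (MsumMech k) x) t
    rw [S.card_repsMS] at h
    exact_mod_cast h
  refine le_of_mul_le_mul_right ?_ hm
  calc (#{ℓ | outcome (MsumMech k) S x ℓ < t} * m : ℝ)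
      ≤ (repsMS (MsumMech k) S x).countP (· < t) * (k + 1) := hsel
    _ ≤ 2 * (m * S.massLeft x t) * (k + 1) := by
        gcongr
        exact S.countP_repsMS_le_two_mul_massLeft x t
    _ = 2 * S.massLeft x t * (k + 1) * m := by ring

theorem sub_card_outcome_lt_le (x : Fin S.n → ℝ) (t : ℝ) :
    k - (#{ℓ | outcome (MsumMech k) S x ℓ < t} : ℝ) ≤ 2 * (1 - S.massLeft x t) * (k + 1) := by
  have hm : (0 : ℝ) < m := by exact_mod_cast S.numGroups_pos
  have hsel : ((repsMS (MsumMech k) S x).countP (· < t) * (k + 1) : ℝ) ≤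
      (#{ℓ | outcome (MsumMech k) S x ℓ < t} + 1) * m := by
    have h := countP_mul_le_card_MsumMech_sel_lt_add_one_mul (k := k)
      (S.repsMS_ne_zero (MsumMech k) x) t
    rw [S.card_repsMS] at h
    exact_mod_cast h
  have hreps : (m - (repsMS (MsumMech k) S x).countP (· < t) : ℝ) ≤
      2 * (m * (1 - S.massLeft x t)) := by
    linarith [S.two_mul_massLeft_le_add_countP_repsMS x t]
  refine le_of_mul_le_mul_right ?_ hm
  calc (k - #{ℓ | outcome (MsumMech k) S x ℓ < t}) * (m : ℝ)
      = (k + 1) * m - (#{ℓ | outcome (MsumMech k) S x ℓ < t} + 1) * m := by ring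
    _ ≤ (m - (repsMS (MsumMech k) S x).countP (· < t)) * (k + 1) := by linarith
    _ ≤ 2 * (m * (1 - S.massLeft x t)) * (k + 1) := by gcongr
    _ = 2 * (1 - S.massLeft x t) * (k + 1) * m := by ring

end FLSetting

section Cut

open MeasureTheory

theorem integral_indicator_uIoc_one (u v : ℝ) :
    ∫ t, (Set.uIoc u v).indicator (1 : ℝ → ℝ) t = |u - v| := by
  rw [integral_indicator_one measurableSet_uIoc, measureReal_def, Real.volume_uIoc,
    ENNReal.toReal_ofReal (abs_nonneg _), abs_sub_comm]

theorem integrable_indicator_uIoc_one (u v : ℝ) :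
    Integrable ((Set.uIoc u v).indicator (1 : ℝ → ℝ)) :=
  (integrable_indicator_iff measurableSet_uIoc).2 (integrableOn_const (by simp))

theorem indicator_uIoc_one (u v t : ℝ) :
    (Set.uIoc u v).indicator (1 : ℝ → ℝ) t =
      if u < t then 1 - (if v < t then 1 else 0) else if v < t then 1 else 0 := by
  by_cases hu : u < t <;> by_cases hv : v < t <;>
    simp [Set.indicator, Set.mem_uIoc, not_lt.1, *]

theorem weighted_cut_le_of_le_half {k a q r : ℝ} (hk : 0 < k) (ha : 0 ≤ a) (ha' : a ≤ 1 / 2)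
    (hq : q ≤ 2 * a * (k + 1)) (hr : 0 ≤ r) :
    a * (k - q) + (1 - a) * q ≤ (3 + 2 / k) * (a * (k - r) + (1 - a) * r) :=
  calc a * (k - q) + (1 - a) * q
      = a * k + (1 - 2 * a) * q := by ring
    _ ≤ a * k + (1 - 2 * a) * (2 * a * (k + 1)) := by gcongr; linarith
    _ ≤ a * k + 1 * (2 * a * (k + 1)) := by gcongr; linarith
    _ = (3 + 2 / k) * (a * k) := by field_simp; ring
    _ ≤ (3 + 2 / k) * (a * k + (1 - 2 * a) * r) := by
        have : 0 ≤ (1 - 2 * a) * r := mul_nonneg (by linarith) hr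
        gcongr
        linarith
    _ = (3 + 2 / k) * (a * (k - r) + (1 - a) * r) := by ring

theorem weighted_cut_le {k a q r : ℝ} (hk : 0 < k) (ha : 0 ≤ a) (ha' : a ≤ 1)
    (hq : q ≤ 2 * a * (k + 1)) (hq' : k - q ≤ 2 * (1 - a) * (k + 1)) (hr : 0 ≤ r) (hr' : r ≤ k) :
    a * (k - q) + (1 - a) * q ≤ (3 + 2 / k) * (a * (k - r) + (1 - a) * r) := by
  rcases le_total a (1 / 2) with h | h
  · exact weighted_cut_le_of_le_half hk ha h hq hr
  · have hmirror :=
      weighted_cut_le_of_le_half hk (sub_nonneg.2 ha') (by linarith) hq' (sub_nonneg.2 hr')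
    simpa only [sub_sub_cancel, add_comm] using hmirror

variable {k m : ℕ}

/-- The individual cost at the threshold `t`: the number of facilities that `t` separates from an
agent at `xi`. Integrating it over `t` yields `sumCost`. -/
def cutCost (k : ℕ) (t xi : ℝ) (y : Fin k → ℝ) : ℝ :=
  ∑ ℓ, (Set.uIoc xi (y ℓ)).indicator 1 t

theorem integrable_cutCost (xi : ℝ) (y : Fin k → ℝ) : Integrable fun t => cutCost k t xi y :=
  integrable_finsetSum _ fun ℓ _ => integrable_indicator_uIoc_one xi (y ℓ)

theorem integral_cutCost (xi : ℝ) (y : Fin k → ℝ) : ∫ t, cutCost k t xi y = sumCost k xi y := by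
  simp only [cutCost, sumCost]
  rw [integral_finsetSum _ fun ℓ _ => integrable_indicator_uIoc_one xi (y ℓ)]
  simp only [integral_indicator_uIoc_one]

theorem cutCost_eq_ite (t xi : ℝ) (y : Fin k → ℝ) :
    cutCost k t xi y = if xi < t then (k - #{ℓ | y ℓ < t} : ℝ) else #{ℓ | y ℓ < t} := by
  simp only [cutCost, indicator_uIoc_one]
  split_ifs <;> simp [sum_sub_distrib]

variable (S : FLSetting k m) (x : Fin S.n → ℝ) (y : Fin k → ℝ)

theorem integrable_SC_cutCost : Integrable fun t => SC (cutCost k t) S x y := by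
  simp only [S.SC_eq_sum_weight]
  exact integrable_finsetSum _ fun i _ => (integrable_cutCost (x i) y).const_mul _

theorem integral_SC_cutCost : ∫ t, SC (cutCost k t) S x y = SC (sumCost k) S x y := by
  simp only [S.SC_eq_sum_weight]
  rw [integral_finsetSum _ fun i _ => (integrable_cutCost (x i) y).const_mul _]
  simp only [integral_const_mul, integral_cutCost]

theorem SC_cutCost_eq (t : ℝ) :
    SC (cutCost k t) S x y =
      S.massLeft x t * (k - #{ℓ | y ℓ < t}) + (1 - S.massLeft x t) * #{ℓ | y ℓ < t} := by
  have hright : ∑ i with ¬ x i < t, S.weight i = 1 - S.massLeft x t := by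
    rw [FLSetting.massLeft, ← S.sum_weight, eq_sub_iff_add_eq', sum_filter_add_sum_filter_not]
  simp only [S.SC_eq_sum_weight, cutCost_eq_ite, mul_ite, sum_ite, ← sum_mul, hright]
  rfl

theorem SC_cutCost_outcome_le (hk : 0 < k) (t : ℝ) :
    SC (cutCost k t) S x (outcome (MsumMech k) S x) ≤
      (3 + 2 / (k : ℝ)) * SC (cutCost k t) S x y := by
  have hcard : #{ℓ | y ℓ < t} ≤ k := (card_le_univ _).trans_eq (Fintype.card_fin k)
  rw [SC_cutCost_eq, SC_cutCost_eq]
  exact weighted_cut_le (by exact_mod_cast hk) (S.massLeft_nonneg x t) (S.massLeft_le_one x t)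
    (S.card_outcome_lt_le x t) (S.sub_card_outcome_lt_le x t) (Nat.cast_nonneg _)
    (by exact_mod_cast hcard)

end Cut

theorem stmt15_general (k : ℕ) (hk : 0 < k) (m : ℕ)
    (S : FLSetting k m) (x : Fin S.n → ℝ) (y : Fin k → ℝ) :
    SC (sumCost k) S x (outcome (MsumMech k) S x)
      ≤ (3 + 2 / (k : ℝ)) * SC (sumCost k) S x y := by
  rw [← integral_SC_cutCost, ← integral_SC_cutCost, ← MeasureTheory.integral_const_mul]
  exact MeasureTheory.integral_mono (integrable_SC_cutCost S x _)
    ((integrable_SC_cutCost S x y).const_mul _) fun t => SC_cutCost_outcome_le S x y hk t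

/-- In the sum-variant, for every `k ≥ 3`, the mechanism `M_k^sum` has approximation
ratio at most `3 + 2/k` on every instance with `m ≥ k` groups. -/
theorem stmt15 (k : ℕ) (hk : 3 ≤ k) (m : ℕ)
    (S : FLSetting k m) (x : Fin S.n → ℝ) (y : Fin k → ℝ) (hy : Feasible S x y) :
    SC (sumCost k) S x (outcome (MsumMech k) S x)
      ≤ (3 + 2 / (k : ℝ)) * SC (sumCost k) S x y := by
  exact stmt15_general k (by omega) m S x y

end
end

section
/- In the sum-variant, for every k ≥ 3 facilities, every two-phase mechanism (not necessarily strategyproof) has approximation ratio at least 3 − 2/k: there exists an instance (with m = k groups of two agents each) on which the social cost of the mechanism's output is at least (3 − 2/k) times the minimum social cost over all feasible solutions. -/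
open Finset

noncomputable section

/-!
In the sum-variant each facility contributes to the social cost on its own, and with as many groups
as facilities a mechanism has to open exactly the representatives. Of two distinct points let `r`
be the one that the mechanism chooses for a group with one agent at each, and let `c` be the other.
Put a single agent at `r` and all others at `c`. Opening every facility at `c` is optimal, but the
mechanism opens one at `r`, which costs `2k - 1` times as much as a facility at `c`; the ratio
is `((2k - 1) + (k - 1)) / k = 3 - 2 / k`.
-/

lemma sum_comp_update_const {ι α A : Type*} [Fintype ι] [DecidableEq ι] [AddCommMonoid A]
    (f : α → A) (a : ι) (r c : α) :
    ∑ i, f (Function.update (fun _ => c) a r i) = f r + (Fintype.card ι - 1) • f c := by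
  calc ∑ i, f (Function.update (fun _ => c) a r i)
      = ∑ i, Function.update (fun _ => f c) a (f r) i :=
        sum_congr rfl fun i _ => congrFun (Function.comp_update f (fun _ => c) a r) i
    _ = f r + (Fintype.card ι - 1) • f c := by
        rw [sum_update_of_mem (mem_univ a), sum_const, ← compl_eq_univ_sdiff, card_compl,
          card_singleton]

namespace FLSetting

lemma exists_groupSize_eq {k m s : ℕ} (hkm : k ≤ m) (hms : 2 ≤ m * s) :
    ∃ S : FLSetting k m, ∀ j, groupSize S j = s := by
  have hs : 0 < s := Nat.pos_of_mul_pos_left (two_pos.trans_le hms)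
  refine ⟨⟨m * s, hms, hkm, Fin.divNat, fun j => ⟨finProdFinEquiv (j, ⟨0, hs⟩), ?_⟩⟩,
    fun j => ?_⟩
  · exact congrArg Prod.fst (finProdFinEquiv.symm_apply_apply _)
  · calc #{i : Fin (m * s) | i.divNat = j}
        = #{p : Fin m × Fin s | p.1 = j} :=
          card_equiv finProdFinEquiv.symm fun i => by simp
      _ = #(({j} : Finset (Fin m)) ×ˢ (univ : Finset (Fin s))) := by
          congr 1
          ext p
          simp only [mem_filter_univ, mem_product, mem_singleton, mem_univ, and_true]
      _ = s := by simp

lemma n_eq_mul_of_groupSize_eq {k m s : ℕ} {S : FLSetting k m} (hS : ∀ j, groupSize S j = s) :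
    S.n = m * s := by
  calc S.n = ∑ j, groupSize S j := by
        simpa [groupSize] using card_eq_sum_card_fiberwise (s := univ) fun i _ => mem_univ (S.grp i)
    _ = m * s := by simp [hS]

end FLSetting

/-- The contribution of a facility at `z` to the social cost in the sum-variant: the average over
the groups of the average distance of their agents to `z`. -/
def facilityCost {k m : ℕ} (S : FLSetting k m) (x : Fin S.n → ℝ) (z : ℝ) : ℝ :=
  (1 / (m : ℝ)) * ∑ j : Fin m,
    (1 / (groupSize S j : ℝ)) * ∑ i ∈ Finset.univ.filter (fun i => S.grp i = j), |x i - z|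

section SocialCost

variable {k m s : ℕ} {S : FLSetting k m}

lemma SC_sumCost (x : Fin S.n → ℝ) (y : Fin k → ℝ) :
    SC (sumCost k) S x y = ∑ ℓ, facilityCost S x (y ℓ) := by
  simp only [SC, sumCost, facilityCost, mul_sum]
  rw [sum_comm (s := (univ : Finset (Fin k)))]
  exact sum_congr rfl fun j _ => sum_comm

lemma facilityCost_of_groupSize_eq (hS : ∀ j, groupSize S j = s) (x : Fin S.n → ℝ) (z : ℝ) :
    facilityCost S x z = (∑ i, |x i - z|) / S.n := by
  have hn : (S.n : ℝ) = m * s := by exact_mod_cast FLSetting.n_eq_mul_of_groupSize_eq hS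
  simp only [facilityCost, hS, ← mul_sum, sum_fiberwise, hn]
  ring

lemma facilityCost_update_const (hS : ∀ j, groupSize S j = s) (a : Fin S.n) (r c z : ℝ) :
    facilityCost S (Function.update (fun _ => c) a r) z =
      (|r - z| + (S.n - 1) * |c - z|) / S.n := by
  rw [facilityCost_of_groupSize_eq hS, sum_comp_update_const (|· - z|), Fintype.card_fin,
    nsmul_eq_mul, Nat.cast_pred (two_pos.trans_le S.hn)]

lemma facilityCost_update_const_le (hS : ∀ j, groupSize S j = s) (a : Fin S.n) (r c z : ℝ) :
    facilityCost S (Function.update (fun _ => c) a r) c ≤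
      facilityCost S (Function.update (fun _ => c) a r) z := by
  have hn : (2 : ℝ) ≤ S.n := by exact_mod_cast S.hn
  rw [facilityCost_update_const hS, facilityCost_update_const hS]
  gcongr ?_ / _
  calc |r - c| + (S.n - 1) * |c - c| = |r - c| := by simp
    _ ≤ |r - z| + 1 * |c - z| := by
        rw [one_mul, abs_sub_comm c z]
        exact abs_sub_le r z c
    _ ≤ |r - z| + (S.n - 1) * |c - z| := by
        gcongr
        linarith

lemma feasible_update_const (hkn : k < S.n) (a : Fin S.n) (r c : ℝ) :
    Feasible S (Function.update (fun _ => c) a r) fun _ => c := by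
  have hcard : k ≤ #({a}ᶜ : Finset (Fin S.n)) := by
    rw [card_compl, card_singleton, Fintype.card_fin]
    exact Nat.le_sub_one_of_lt hkn
  refine ⟨orderEmbOfCardLe _ hcard, (orderEmbOfCardLe _ hcard).injective, fun ℓ => ?_⟩
  have hne : orderEmbOfCardLe _ hcard ℓ ≠ a := by
    simpa using orderEmbOfCardLe_mem _ hcard ℓ
  rw [Function.update_of_ne hne]

end SocialCost

section Representatives

variable {k m : ℕ} {S : FLSetting k m}

lemma mem_groupMS {x : Fin S.n → ℝ} {j : Fin m} {z : ℝ} :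
    z ∈ groupMS S x j ↔ ∃ i, S.grp i = j ∧ x i = z := by
  simp [groupMS]

lemma groupMS_update_const (a : Fin S.n) (r c : ℝ) :
    groupMS S (Function.update (fun _ => c) a r) (S.grp a) =
      r ::ₘ Multiset.replicate (groupSize S (S.grp a) - 1) c := by
  set G : Finset (Fin S.n) := univ.filter fun i => S.grp i = S.grp a
  have ha : a ∈ G := by simp [G]
  have hG : G.val = a ::ₘ (G.erase a).val := by
    rw [← insert_val_of_notMem (notMem_erase a G), insert_erase ha]
  have hrest : (G.erase a).val.map (Function.update (fun _ => c) a r) =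
      Multiset.replicate (#G - 1) c := by
    rw [← card_erase_of_mem ha, card_def, ← Multiset.map_const']
    exact Multiset.map_congr rfl fun i hi => Function.update_of_ne (ne_of_mem_erase (s := G) hi) _ _
  rw [groupMS, hG, Multiset.map_cons, hrest, Function.update_self]
  rfl

end Representatives

namespace TwoPhase.Valid

variable {k m : ℕ} {M : TwoPhase k}

lemma exists_rep_pair_eq_left (hM : M.Valid) (m : ℕ) : ∃ r c : ℝ, r ≠ c ∧ M.rep m {r, c} = r := by
  have hmem : M.rep m {0, 1} = 0 ∨ M.rep m {0, 1} = 1 := by simpa using hM.1 m {0, 1} (by simp)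
  rcases hmem with h | h
  · exact ⟨0, 1, zero_ne_one, h⟩
  · exact ⟨1, 0, one_ne_zero, Multiset.pair_comm (0 : ℝ) 1 ▸ h⟩

lemma exists_rep_groupMS_eq (hM : M.Valid) (S : FLSetting k m) (x : Fin S.n → ℝ) (j : Fin m) :
    ∃ i, S.grp i = j ∧ x i = M.rep m (groupMS S x j) := by
  obtain ⟨i, hi⟩ := S.surj j
  have hmem : x i ∈ groupMS S x j := mem_groupMS.2 ⟨i, hi, rfl⟩
  exact mem_groupMS.1 (hM.1 m _ fun h => Multiset.notMem_zero _ (h ▸ hmem))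

lemma rep_groupMS_update_const (hM : M.Valid) {S : FLSetting k m} (hS : ∀ j, groupSize S j = 2)
    {r c : ℝ} (hrep : M.rep m {r, c} = r) (a : Fin S.n) (j : Fin m) :
    M.rep m (groupMS S (Function.update (fun _ => c) a r) j) =
      Function.update (fun _ => c) (S.grp a) r j := by
  rcases eq_or_ne j (S.grp a) with rfl | hj
  · rw [groupMS_update_const, hS, Function.update_self]
    exact hrep
  · obtain ⟨i, rfl, hi⟩ := hM.exists_rep_groupMS_eq S (Function.update (fun _ => c) a r) j
    rw [← hi, Function.update_of_ne hj, Function.update_of_ne (ne_of_apply_ne S.grp hj)]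

lemma coe_ofFn_outcome (hM : M.Valid) (S : FLSetting k k) (x : Fin S.n → ℝ) :
    (List.ofFn (outcome M S x) : Multiset ℝ) = repsMS M S x := by
  have hcard : Multiset.card (repsMS M S x) = k := by simp [repsMS]
  exact Multiset.eq_of_le_of_card_le (hM.2 k _ hcard le_rfl) (by simp [hcard])

lemma sum_comp_outcome {A : Type*} [AddCommMonoid A] (hM : M.Valid) (S : FLSetting k k)
    (x : Fin S.n → ℝ) (F : ℝ → A) :
    ∑ ℓ, F (outcome M S x ℓ) = ∑ j, F (M.rep k (groupMS S x j)) := by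
  calc ∑ ℓ, F (outcome M S x ℓ) = ((List.ofFn (outcome M S x) : Multiset ℝ).map F).sum := by
        simp [List.map_ofFn, List.sum_ofFn]
    _ = ((repsMS M S x).map F).sum := by rw [hM.coe_ofFn_outcome]
    _ = ∑ j, F (M.rep k (groupMS S x j)) := by
        rw [repsMS, Multiset.map_map]
        rfl

lemma SC_outcome_update_const (hM : M.Valid) {S : FLSetting k k} (hS : ∀ j, groupSize S j = 2)
    {r c : ℝ} (hrep : M.rep k {r, c} = r) (a : Fin S.n) :
    SC (sumCost k) S (Function.update (fun _ => c) a r)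
        (outcome M S (Function.update (fun _ => c) a r)) =
      facilityCost S (Function.update (fun _ => c) a r) r +
        (k - 1 : ℕ) * facilityCost S (Function.update (fun _ => c) a r) c := by
  rw [SC_sumCost, hM.sum_comp_outcome]
  simp only [hM.rep_groupMS_update_const hS hrep]
  rw [sum_comp_update_const (facilityCost S _), Fintype.card_fin, nsmul_eq_mul]

end TwoPhase.Valid

/-- Positivity of the optimum matters: with all agents at one point, both sides of the last
equation would be `0`. -/
theorem stmt16_general {k : ℕ} {M : TwoPhase k} (hM : M.Valid) (S : FLSetting k k)
    (hS : ∀ j, groupSize S j = 2) :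
    ∃ (x : Fin S.n → ℝ) (yopt : Fin k → ℝ), Feasible S x yopt ∧
      (∀ y : Fin k → ℝ, SC (sumCost k) S x yopt ≤ SC (sumCost k) S x y) ∧
      0 < SC (sumCost k) S x yopt ∧
      (3 - 2 / (k : ℝ)) * SC (sumCost k) S x yopt = SC (sumCost k) S x (outcome M S x) := by
  obtain ⟨r, c, hrc, hrep⟩ := hM.exists_rep_pair_eq_left k
  have hn : S.n = k * 2 := FLSetting.n_eq_mul_of_groupSize_eq hS
  have hk : 0 < k := by have := S.hn; omega
  let a : Fin S.n := ⟨0, by omega⟩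
  let x : Fin S.n → ℝ := Function.update (fun _ => c) a r
  have hcost_c : facilityCost S x c = |r - c| / (2 * k) := by
    simp [x, facilityCost_update_const hS, hn, mul_comm]
  have hcost_r : facilityCost S x r = (2 * k - 1) * |r - c| / (2 * k) := by
    simp [x, facilityCost_update_const hS, hn, mul_comm, abs_sub_comm c r]
  have hopt : SC (sumCost k) S x (fun _ => c) = |r - c| / 2 := by
    rw [SC_sumCost, hcost_c, sum_const, card_univ, Fintype.card_fin, nsmul_eq_mul]
    field_simp
  refine ⟨x, fun _ => c, feasible_update_const (by omega) a r c, fun y => ?_, ?_, ?_⟩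
  · rw [SC_sumCost, SC_sumCost]
    exact sum_le_sum fun ℓ _ => facilityCost_update_const_le hS a r c (y ℓ)
  · rw [hopt]
    exact half_pos (abs_sub_pos.2 hrc)
  · rw [hopt, hM.SC_outcome_update_const hS hrep a, hcost_r, hcost_c, Nat.cast_pred hk]
    field_simp
    ring

/-- In the sum-variant, for every `k ≥ 3`, every (valid) two-phase mechanism has
approximation ratio at least `3 − 2/k`: there is an instance with `m = k` groups of two
agents each on which the output's social cost is at least `(3 − 2/k)` times the minimum
social cost over all feasible solutions. -/
theorem stmt16 (k : ℕ) (hk : 3 ≤ k) (M : TwoPhase k) (hM : M.Valid) :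
    ∃ (S : FLSetting k k) (x : Fin S.n → ℝ),
      (∀ j : Fin k, groupSize S j = 2) ∧
      ∃ yopt : Fin k → ℝ, Feasible S x yopt ∧
        (∀ y : Fin k → ℝ, Feasible S x y → SC (sumCost k) S x yopt ≤ SC (sumCost k) S x y) ∧
        (3 - 2 / (k : ℝ)) * SC (sumCost k) S x yopt ≤ SC (sumCost k) S x (outcome M S x) := by
  obtain ⟨S, hS⟩ := FLSetting.exists_groupSize_eq (k := k) (s := 2) le_rfl (by omega)
  obtain ⟨x, yopt, hfeas, hmin, -, hratio⟩ := stmt16_general hM S hS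
  exact ⟨S, x, hS, yopt, hfeas, fun y _ => hmin y, hratio.le⟩

end
end
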